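/- arXiv:math/9211207 — 2 statements merged into one kernel-verified Lean document; each statement's English description precedes it below -/
import Mathlib

section
/- Let Z be a quasi-Banach space of cotype 2 and let X be a quasi-Banach space subordinate to Z. Assume that either X or Z has the strong approximation property. If Y is a closed subspace of X whose dual Y* has cotype 2, then Y is locally convex (its quasi-norm is equivalent to a norm). -/
open scoped ENNReal NNReal BigOperators

universe uX uY uZ uW uE uO uG uV

/-- The sign `±1` attached to a Boolean. -/
noncomputable def rsign (b : Bool) : ℝ := if b then 1 else -1

section Defs

variable {X : Type uX} {Y : Type uY} {Z : Type uZ} {W : Type uW}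
  [AddCommGroup X] [Module ℝ X] [AddCommGroup Y] [Module ℝ Y]
  [AddCommGroup Z] [Module ℝ Z] [AddCommGroup W] [Module ℝ W]

/-- A quasi-norm on a real vector space. -/
structure QuasiNormOn (X : Type uX) [AddCommGroup X] [Module ℝ X] : Type uX where
  q : X → ℝ
  nonneg : ∀ x, 0 ≤ q x
  eq_zero_iff : ∀ x, q x = 0 ↔ x = 0
  smul_eq : ∀ (a : ℝ) (x : X), q (a • x) = |a| * q x
  k : ℝ
  one_le_k : 1 ≤ k
  tri : ∀ x y, q (x + y) ≤ k * (q x + q y)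

/-- Completeness of a quasi-normed space, via Cauchy sequences for the quasi-norm
(the induced topology is metrizable, so sequences suffice). -/
def CauchyComplete (q : X → ℝ) : Prop :=
  ∀ f : ℕ → X, (∀ ε > (0:ℝ), ∃ N, ∀ m ≥ N, ∀ n ≥ N, q (f m - f n) < ε) →
    ∃ x, ∀ ε > (0:ℝ), ∃ N, ∀ n ≥ N, q (f n - x) < ε

/-- `u` is bounded by `M` as an operator `(X,qX) → (Y,qY)`. -/
def OpBoundedBy (qX : X → ℝ) (qY : Y → ℝ) (u : X →ₗ[ℝ] Y) (M : ℝ) : Prop :=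
  ∀ x, qY (u x) ≤ M * qX x

/-- `u` is a bounded operator `(X,qX) → (Y,qY)`. -/
def IsBddOp (qX : X → ℝ) (qY : Y → ℝ) (u : X →ₗ[ℝ] Y) : Prop :=
  ∃ M, 0 ≤ M ∧ OpBoundedBy qX qY u M

/-- The operator (quasi-)norm of `u : (X,qX) → (Y,qY)`. -/
noncomputable def opQNorm (qX : X → ℝ) (qY : Y → ℝ) (u : X →ₗ[ℝ] Y) : ℝ :=
  sInf {M | 0 ≤ M ∧ OpBoundedBy qX qY u M}

/-- The `L_p`-average of `q (∑ᵢ εᵢ xᵢ)` over all choices of signs `εᵢ = ±1`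
(the normalized counting measure on `D_n = {-1,1}ⁿ`). -/
noncomputable def radAvg (q : X → ℝ) (p : ℝ) {n : ℕ} (x : Fin n → X) : ℝ :=
  (((2:ℝ) ^ n)⁻¹ * ∑ ε : Fin n → Bool, q (∑ i, rsign (ε i) • x i) ^ p) ^ (1 / p)

/-- `(X,q)` has cotype `p` with constant at most `C`. -/
def CotypeConstLe (q : X → ℝ) (p C : ℝ) : Prop :=
  ∀ (n : ℕ) (x : Fin n → X), (∑ i, q (x i) ^ p) ^ (1 / p) ≤ C * radAvg q p x

/-- `(X,q)` has cotype `p`. -/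
def HasCotype (q : X → ℝ) (p : ℝ) : Prop := ∃ C, 0 < C ∧ CotypeConstLe q p C

/-- `(X,q)` has type 2 constant at most `C`. -/
def Type2ConstLe (q : X → ℝ) (C : ℝ) : Prop :=
  ∀ (n : ℕ) (x : Fin n → X),
    radAvg q (2:ℝ) x ≤ C * (∑ i, q (x i) ^ (2:ℝ)) ^ (1/2 : ℝ)

/-- A linear functional bounded with respect to the quasi-norm `q`. -/
def DualBdd (q : X → ℝ) (f : X →ₗ[ℝ] ℝ) : Prop := ∃ M, 0 ≤ M ∧ ∀ x, |f x| ≤ M * q x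

/-- The dual norm of a linear functional on `(X,q)`. -/
noncomputable def dualNorm (q : X → ℝ) (f : X →ₗ[ℝ] ℝ) : ℝ :=
  sInf {M | 0 ≤ M ∧ ∀ x, |f x| ≤ M * q x}

/-- The dual space `X*` of `(X,q)` has cotype 2 (as a Banach space with the dual norm). -/
def DualHasCotype2 (q : X → ℝ) : Prop :=
  ∃ C, 0 < C ∧ ∀ (n : ℕ) (f : Fin n → (X →ₗ[ℝ] ℝ)), (∀ i, DualBdd q (f i)) →
    (∑ i, dualNorm q (f i) ^ (2:ℝ)) ^ (1/2:ℝ) ≤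
      C * ((((2:ℝ) ^ n)⁻¹ *
        ∑ ε : Fin n → Bool, dualNorm q (∑ i, rsign (ε i) • f i) ^ (2:ℝ)) ^ (1/2:ℝ))

/-- `(X,qX)` is subordinate to `(Z,qZ)` : `X` is isomorphic to a (closed) subspace of
`ℓ_∞(I; Z)` for some index set `I`. -/
def Subordinate (qX : X → ℝ) (qZ : Z → ℝ) : Prop :=
  ∃ (I : Type uX) (_ : Nonempty I) (T : X →ₗ[ℝ] (I → Z)) (c C : ℝ), 0 < c ∧ 0 < C ∧
    (∀ x i, qZ (T x i) ≤ C * qX x) ∧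
    (∀ x, c * qX x ≤ sSup (Set.range fun i => qZ (T x i)))

/-- `S` is a closed subset of `(X,q)` (sequences suffice, the topology being metrizable). -/
def QClosed (q : X → ℝ) (S : Set X) : Prop :=
  ∀ (f : ℕ → X) (x : X), (∀ n, f n ∈ S) →
    Filter.Tendsto (fun n => q (f n - x)) Filter.atTop (nhds 0) → x ∈ S

/-- The quasi-norm `q` is equivalent to a (genuine) norm, i.e. the space is locally convex. -/
def IsLocallyConvexQN (q : X → ℝ) : Prop :=
  ∃ (N : X → ℝ) (c C : ℝ), 0 < c ∧
    (∀ x y, N (x + y) ≤ N x + N y) ∧ (∀ (a : ℝ) (x : X), N (a • x) = |a| * N x) ∧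
    ∀ x, c * N x ≤ q x ∧ q x ≤ C * N x

/-- `S` is closed under pointwise limits of bounded nets (equivalently, filters). -/
def NetClosed (qX : X → ℝ) (qY : Y → ℝ) (S : Set (X →ₗ[ℝ] Y)) : Prop :=
  ∀ l : Filter (X →ₗ[ℝ] Y), l.NeBot →
    (∀ᶠ w in l, w ∈ S) →
    (∃ B, ∀ᶠ w in l, OpBoundedBy qX qY w B) →
    ∀ u : X →ₗ[ℝ] Y,
      (∀ x, Filter.Tendsto (fun w : X →ₗ[ℝ] Y => qY (w x - u x)) l (nhds 0)) → u ∈ S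

/-- `u` belongs to the smallest subspace of `L(X,Y)` which contains the finite-rank
operators and is closed under pointwise convergence of bounded nets. -/
def StronglyApproximable (qX : X → ℝ) (qY : Y → ℝ) (u : X →ₗ[ℝ] Y) : Prop :=
  ∀ S : Set (X →ₗ[ℝ] Y),
    (∀ w ∈ S, IsBddOp qX qY w) →
    (∀ w w', w ∈ S → w' ∈ S → w + w' ∈ S) →
    (∀ (a : ℝ) (w : X →ₗ[ℝ] Y), w ∈ S → a • w ∈ S) →
    (∀ w : X →ₗ[ℝ] Y, IsBddOp qX qY w → Module.Finite ℝ (LinearMap.range w) → w ∈ S) →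
    NetClosed qX qY S → u ∈ S

end Defs

/-!
Subordination embeds `X` into bounded families in `Z`, so the quasi-norm of `Y` is equivalent to a
supremum of `q (u x)` over uniformly bounded operators `u : Y → Z`. An operator that factors through
a Hilbert space satisfies `q (u x) ≤ √G * ‖x‖`, with `‖·‖` the norm of the Banach envelope, so it
suffices to factor these `u` with a uniform constant `G`.

The key point is an a priori estimate: an operator with *some* factorization constant has one
controlled by its norm `M`. Given a constant `G`, Maurey's empirical method bounds `q (u x) ^ 2` by
`(ε * G + A * M ^ 2) * ‖x‖ ^ 2`, up to constants and with `A` depending only on `ε`. A Riesz product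
approximates the Rademacher projection on the cube by a kernel bounded in `L¹`, up to an operator of
small norm on `L²`; together with cotype 2 of the dual this makes `u` of type 2, with squared
constant `ε * G + A * M ^ 2`. By Kwapień's theorem, proved through the rotation invariance of
Gaussian measures, cotype 2 of `Z` turns this back into a Hilbert space factorization. Hence the
least constant satisfies `G ≤ G / 2 + B * M ^ 2`, with `B` independent of `u`.

The a priori estimate passes to pointwise limits of bounded nets. As finite-rank operators factor
through Euclidean spaces, the strong approximation property provides the required factorizations.
-/

namespace QuasiNormOn

variable {E : Type uE} [AddCommGroup E] [Module ℝ E] (Q : QuasiNormOn E)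

lemma k_pos : 0 < Q.k := one_pos.trans_le Q.one_le_k

lemma q_zero : Q.q 0 = 0 := (Q.eq_zero_iff 0).2 rfl

lemma q_neg (x : E) : Q.q (-x) = Q.q x := by
  simpa using Q.smul_eq (-1) x

lemma q_add_sq_le (x y : E) : Q.q (x + y) ^ 2 ≤ 2 * Q.k ^ 2 * (Q.q x ^ 2 + Q.q y ^ 2) :=
  calc Q.q (x + y) ^ 2 ≤ (Q.k * (Q.q x + Q.q y)) ^ 2 := pow_le_pow_left₀ (Q.nonneg _) (Q.tri x y) 2
    _ = Q.k ^ 2 * (Q.q x + Q.q y) ^ 2 := mul_pow _ _ _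
    _ ≤ Q.k ^ 2 * (2 * (Q.q x ^ 2 + Q.q y ^ 2)) := by gcongr; exact add_sq_le
    _ = 2 * Q.k ^ 2 * (Q.q x ^ 2 + Q.q y ^ 2) := by ring

lemma q_sum_le {ι : Type*} (s : Finset ι) (f : ι → E) :
    Q.q (∑ i ∈ s, f i) ≤ Q.k ^ s.card * ∑ i ∈ s, Q.q (f i) := by
  classical
  induction s using Finset.induction_on with
  | empty => simp [Q.q_zero]
  | insert a s ha ih =>
    rw [Finset.sum_insert ha, Finset.sum_insert ha, Finset.card_insert_of_notMem ha]
    have hk : 0 ≤ Q.k := Q.k_pos.le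
    have hfa : Q.q (f a) ≤ Q.k ^ s.card * Q.q (f a) :=
      le_mul_of_one_le_left (Q.nonneg _) (one_le_pow₀ Q.one_le_k)
    calc Q.q (f a + ∑ i ∈ s, f i) ≤ Q.k * (Q.q (f a) + Q.q (∑ i ∈ s, f i)) := Q.tri _ _
      _ ≤ Q.k * (Q.k ^ s.card * Q.q (f a) + Q.k ^ s.card * ∑ i ∈ s, Q.q (f i)) := by gcongr
      _ = Q.k ^ (s.card + 1) * (Q.q (f a) + ∑ i ∈ s, Q.q (f i)) := by ring

lemma q_average_le {m : ℕ} (hm : m ≠ 0) {y : Fin m → E} {ρ : ℝ} (hy : ∀ r, Q.q (y r) ≤ ρ) :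
    Q.q ((m : ℝ)⁻¹ • ∑ r, y r) ≤ Q.k ^ m * ρ := by
  have hk := Q.k_pos
  have hm' : (m : ℝ) ≠ 0 := Nat.cast_ne_zero.2 hm
  calc Q.q ((m : ℝ)⁻¹ • ∑ r, y r) = (m : ℝ)⁻¹ * Q.q (∑ r, y r) := by
        rw [Q.smul_eq, abs_of_nonneg (by positivity)]
    _ ≤ (m : ℝ)⁻¹ * (Q.k ^ m * ∑ r, Q.q (y r)) := by
        gcongr
        simpa only [Finset.card_univ, Fintype.card_fin] using Q.q_sum_le Finset.univ y
    _ ≤ (m : ℝ)⁻¹ * (Q.k ^ m * ∑ _r : Fin m, ρ) := by gcongr with r; exact hy r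
    _ = Q.k ^ m * ρ := by
        simp only [Finset.sum_const, Finset.card_univ, Fintype.card_fin, nsmul_eq_mul]
        field_simp

lemma exists_q_sum_smul_le_norm {ι : Type*} [Fintype ι] (x : ι → E) :
    ∃ L, 0 ≤ L ∧ ∀ v : EuclideanSpace ℝ ι, Q.q (∑ i, v i • x i) ≤ L * ‖v‖ := by
  have hk : 0 ≤ Q.k := Q.k_pos.le
  refine ⟨Q.k ^ Fintype.card ι * ∑ i, Q.q (x i),
    mul_nonneg (pow_nonneg hk _) (Finset.sum_nonneg fun i _ => Q.nonneg _), fun v => ?_⟩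
  calc Q.q (∑ i, v i • x i) ≤ Q.k ^ Fintype.card ι * ∑ i, Q.q (v i • x i) := Q.q_sum_le _ _
    _ ≤ Q.k ^ Fintype.card ι * ∑ i, Q.q (x i) * ‖v‖ := by
      gcongr with i
      rw [Q.smul_eq, mul_comm]
      exact mul_le_mul_of_nonneg_left (PiLp.norm_apply_le v i) (Q.nonneg _)
    _ = Q.k ^ Fintype.card ι * (∑ i, Q.q (x i)) * ‖v‖ := by rw [← Finset.sum_mul, mul_assoc]

/-- The quasi-norm induced on a subspace. -/
def restrict (F : Submodule ℝ E) : QuasiNormOn F where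
  q x := Q.q x
  nonneg x := Q.nonneg x
  eq_zero_iff x := by rw [Q.eq_zero_iff, ZeroMemClass.coe_eq_zero]
  smul_eq a x := Q.smul_eq a x
  k := Q.k
  one_le_k := Q.one_le_k
  tri x y := Q.tri x y

end QuasiNormOn

section Envelope

open scoped Pointwise

lemma absorbent_of_balanced {E : Type uE} [AddCommGroup E] [Module ℝ E]
    {s : Set E} (hs : Balanced ℝ s) (h : ∀ x, ∃ r : ℝ, x ∈ r • s) : Absorbent ℝ s := by
  intro x
  obtain ⟨r, hr⟩ := h x
  refine Absorbs.of_norm (𝕜 := ℝ) ⟨‖r‖, fun c hc => ?_⟩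
  exact Set.singleton_subset_iff.2 (hs.smul_mono hc hr)

namespace QuasiNormOn

variable {E : Type uE} [AddCommGroup E] [Module ℝ E] (Q : QuasiNormOn E)

/-- The closed unit ball of a quasi-norm. -/
def unitBall : Set E := {x | Q.q x ≤ 1}

lemma balanced_unitBall : Balanced ℝ Q.unitBall := by
  rintro a ha _ ⟨x, hx, rfl⟩
  exact (Q.smul_eq a x).trans_le (mul_le_one₀ ha (Q.nonneg _) hx)

lemma mem_smul_unitBall {x : E} {r : ℝ} (hr : 0 < r) (h : Q.q x ≤ r) : x ∈ r • Q.unitBall := by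
  rw [Set.mem_smul_set_iff_inv_smul_mem₀ hr.ne']
  change Q.q (r⁻¹ • x) ≤ 1
  rwa [Q.smul_eq, abs_of_pos (inv_pos.2 hr), inv_mul_le_one₀ hr]

lemma absorbent_convexHull_unitBall : Absorbent ℝ (convexHull ℝ Q.unitBall) := by
  refine Absorbent.mono ?_ (subset_convexHull ℝ _)
  refine absorbent_of_balanced Q.balanced_unitBall fun x => ⟨Q.q x + 1, ?_⟩
  exact Q.mem_smul_unitBall (add_pos_of_nonneg_of_pos (Q.nonneg x) one_pos) (by simp)

/-- The seminorm of the Banach envelope: the largest seminorm dominated by the quasi-norm. -/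
noncomputable def envelope : Seminorm ℝ E :=
  gaugeSeminorm Q.balanced_unitBall.convexHull (convex_convexHull ℝ _)
    Q.absorbent_convexHull_unitBall

lemma envelope_le (x : E) : Q.envelope x ≤ Q.q x := by
  refine le_of_forall_pos_le_add fun ε hε => ?_
  have hpos : 0 < Q.q x + ε := add_pos_of_nonneg_of_pos (Q.nonneg x) hε
  refine gauge_le_of_mem hpos.le ?_
  exact Set.smul_set_mono (subset_convexHull ℝ _) (Q.mem_smul_unitBall hpos (by linarith))

/-- The absolutely convex combinations defining the envelope, indexed by an initial segment of `ℕ`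
so that families of them live in `Type`. -/
lemma exists_of_envelope_lt {x : E} {r : ℝ} (h : Q.envelope x < r) :
    ∃ (n : ℕ) (w : Fin n → ℝ) (z : Fin n → E), (∀ i, 0 < w i) ∧ ∑ i, w i = 1 ∧
      (∀ i, Q.q (z i) ≤ r) ∧ ∑ i, w i • z i = x := by
  obtain ⟨b, hb, hbr, y, hy, rfl⟩ := exists_lt_of_gauge_lt Q.absorbent_convexHull_unitBall h
  obtain ⟨ι, _, z, w, hz, -, hw, hw1, rfl⟩ := eq_pos_convex_span_of_mem_convexHull hy
  let e := (Fintype.equivFin ι).symm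
  refine ⟨Fintype.card ι, w ∘ e, fun i => b • z (e i), fun i => hw _, ?_, fun i => ?_, ?_⟩
  · exact (e.sum_comp w).trans hw1
  · rw [Q.smul_eq, abs_of_pos hb]
    exact (mul_le_of_le_one_right hb.le (hz ⟨_, rfl⟩)).trans hbr.le
  · simp only [Function.comp_apply, smul_comm _ b, ← Finset.smul_sum]
    rw [e.sum_comp fun i => w i • z i]

end QuasiNormOn

end Envelope

lemma le_apply_zero_of_forall_pos {f : ℝ → ℝ} (hf : Continuous f) {A : ℝ}
    (h : ∀ ε > 0, A ≤ f ε) : A ≤ f 0 :=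
  ge_of_tendsto (hf.continuousWithinAt (s := Set.Ioi 0))
    (eventually_nhdsWithin_of_forall fun ε hε => h ε hε)

section HilbertFactor

/-- `a` maps Euclidean space to Euclidean space with squared operator norm at most `c`. -/
def SqOpNormLe {ι κ : Type*} [Fintype ι] [Fintype κ] (a : Matrix ι κ ℝ) (c : ℝ) : Prop :=
  ∀ v : κ → ℝ, ∑ i, (∑ j, a i j * v j) ^ 2 ≤ c * ∑ j, v j ^ 2

namespace SqOpNormLe

variable {ι κ : Type*} [Fintype ι] [Fintype κ] {a : Matrix ι κ ℝ} {c : ℝ}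

lemma smul (h : SqOpNormLe a c) (r : ℝ) : SqOpNormLe (r • a) (r ^ 2 * c) := by
  intro v
  simp only [Matrix.smul_apply, smul_eq_mul, mul_assoc, ← Finset.mul_sum, mul_pow]
  exact mul_le_mul_of_nonneg_left (h v) (sq_nonneg r)

lemma split_columns (h : SqOpNormLe a c) (hc : 0 ≤ c) {L : κ → Type*} [∀ j, Fintype (L j)]
    {w : ∀ j, L j → ℝ} (hw : ∀ j l, 0 ≤ w j l) (hw1 : ∀ j, ∑ l, w j l = 1) :
    SqOpNormLe (Matrix.of fun i (p : Σ j, L j) => a i p.1 * √(w p.1 p.2)) c := by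
  intro v
  calc ∑ i, (∑ p : Σ j, L j, a i p.1 * √(w p.1 p.2) * v p) ^ 2
      = ∑ i, (∑ j, a i j * ∑ l, √(w j l) * v ⟨j, l⟩) ^ 2 := by
        simp only [Fintype.sum_sigma, Finset.mul_sum, mul_assoc]
    _ ≤ c * ∑ j, (∑ l, √(w j l) * v ⟨j, l⟩) ^ 2 := h _
    _ ≤ c * ∑ j, ∑ l, v ⟨j, l⟩ ^ 2 := by
        gcongr with j
        have hCS := Finset.sum_mul_sq_le_sq_mul_sq Finset.univ (fun l => √(w j l))
          (fun l => v ⟨j, l⟩)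
        simpa only [Real.sq_sqrt (hw j _), hw1, one_mul] using hCS
    _ = c * ∑ p, v p ^ 2 := by rw [Fintype.sum_sigma]

end SqOpNormLe

variable {E : Type uE} {Z : Type uZ} [AddCommGroup E] [Module ℝ E] [AddCommGroup Z] [Module ℝ Z]

/-- The Lindenstrauss–Pełczyński criterion for `u` to factor through a Hilbert space with constant
`√G`: the amplifications of `u` by Euclidean contractions are uniformly bounded. -/
structure HilbertFactorBound (QE : QuasiNormOn E) (QZ : QuasiNormOn Z) (u : E →ₗ[ℝ] Z)
    (G : ℝ) : Prop where
  nonneg : 0 ≤ G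
  sum_sq_le : ∀ ⦃ι κ : Type⦄ [Fintype ι] [Fintype κ] (a : Matrix ι κ ℝ), SqOpNormLe a 1 →
    ∀ x : κ → E, ∑ i, QZ.q (u (∑ j, a i j • x j)) ^ 2 ≤ G * ∑ j, QE.q (x j) ^ 2

namespace HilbertFactorBound

variable {QE : QuasiNormOn E} {QZ : QuasiNormOn Z} {u : E →ₗ[ℝ] Z} {G : ℝ}

lemma sum_sq_le_mul (h : HilbertFactorBound QE QZ u G) {ι κ : Type} [Fintype ι] [Fintype κ]
    {a : Matrix ι κ ℝ} {c : ℝ} (hc : 0 < c) (ha : SqOpNormLe a c) (x : κ → E) :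
    ∑ i, QZ.q (u (∑ j, a i j • x j)) ^ 2 ≤ c * G * ∑ j, QE.q (x j) ^ 2 := by
  have hs : √c ≠ 0 := (Real.sqrt_pos.2 hc).ne'
  have hsq : √c ^ 2 = c := Real.sq_sqrt hc.le
  have hcontr : SqOpNormLe ((√c)⁻¹ • a) 1 := by
    simpa only [inv_pow, hsq, inv_mul_cancel₀ hc.ne'] using ha.smul (√c)⁻¹
  calc ∑ i, QZ.q (u (∑ j, a i j • x j)) ^ 2
      = ∑ i, QZ.q (u (∑ j, ((√c)⁻¹ • a) i j • √c • x j)) ^ 2 := by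
        simp only [Matrix.smul_apply, smul_eq_mul, smul_smul, mul_right_comm _ _ (√c),
          inv_mul_cancel₀ hs, one_mul]
    _ ≤ G * ∑ j, QE.q (√c • x j) ^ 2 := h.sum_sq_le _ hcontr _
    _ = c * G * ∑ j, QE.q (x j) ^ 2 := by
        simp only [QE.smul_eq, mul_pow, sq_abs, hsq, ← Finset.mul_sum]
        ring

lemma sum_sq_le_of_envelope_lt (h : HilbertFactorBound QE QZ u G) {ι κ : Type} [Fintype ι]
    [Fintype κ] {a : Matrix ι κ ℝ} {c : ℝ} (hc : 0 < c) (ha : SqOpNormLe a c) {x : κ → E}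
    {r : κ → ℝ} (hr : ∀ j, QE.envelope (x j) < r j) :
    ∑ i, QZ.q (u (∑ j, a i j • x j)) ^ 2 ≤ c * G * ∑ j, r j ^ 2 := by
  choose n w z hw hw1 hz hx using fun j => QE.exists_of_envelope_lt (hr j)
  have hsplit := ha.split_columns hc.le (fun j l => (hw j l).le) hw1
  have hcG : 0 ≤ c * G := mul_nonneg hc.le h.nonneg
  calc ∑ i, QZ.q (u (∑ j, a i j • x j)) ^ 2
      = ∑ i, QZ.q (u (∑ p : Σ j, Fin (n j),
          (a i p.1 * √(w p.1 p.2)) • √(w p.1 p.2) • z p.1 p.2)) ^ 2 := by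
        simp only [Fintype.sum_sigma, smul_smul, mul_assoc, Real.mul_self_sqrt (hw _ _).le]
        simp only [← smul_smul, ← Finset.smul_sum, hx]
    _ ≤ c * G * ∑ p : Σ j, Fin (n j), QE.q (√(w p.1 p.2) • z p.1 p.2) ^ 2 :=
        h.sum_sq_le_mul hc hsplit _
    _ = c * G * ∑ j, ∑ l, w j l * QE.q (z j l) ^ 2 := by
        simp only [Fintype.sum_sigma, QE.smul_eq, mul_pow, sq_abs, Real.sq_sqrt (hw _ _).le]
    _ ≤ c * G * ∑ j, ∑ l, w j l * r j ^ 2 := by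
        gcongr with j _ l
        · exact (hw j l).le
        · exact QE.nonneg _
        · exact hz j l
    _ = c * G * ∑ j, r j ^ 2 := by simp only [← Finset.sum_mul, hw1, one_mul]

lemma sum_sq_le_envelope (h : HilbertFactorBound QE QZ u G) {ι κ : Type} [Fintype ι]
    [Fintype κ] {a : Matrix ι κ ℝ} {c : ℝ} (hc : 0 < c) (ha : SqOpNormLe a c) (x : κ → E) :
    ∑ i, QZ.q (u (∑ j, a i j • x j)) ^ 2 ≤ c * G * ∑ j, QE.envelope (x j) ^ 2 := by
  have hcont : Continuous fun ε : ℝ => c * G * ∑ j, (QE.envelope (x j) + ε) ^ 2 := by fun_prop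
  simpa only [add_zero] using le_apply_zero_of_forall_pos hcont fun ε hε =>
    h.sum_sq_le_of_envelope_lt hc ha fun j => lt_add_of_pos_right _ hε

lemma apply_sq_le (h : HilbertFactorBound QE QZ u G) (x : E) :
    QZ.q (u x) ^ 2 ≤ G * QE.envelope x ^ 2 := by
  have hone : SqOpNormLe (1 : Matrix Unit Unit ℝ) 1 := fun v => by simp
  simpa using h.sum_sq_le_envelope one_pos hone fun _ => x

lemma mono (h : HilbertFactorBound QE QZ u G) {G' : ℝ} (hG : G ≤ G') :
    HilbertFactorBound QE QZ u G' where
  nonneg := h.nonneg.trans hG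
  sum_sq_le _ _ _ _ a ha x := (h.sum_sq_le a ha x).trans <|
    mul_le_mul_of_nonneg_right hG (Finset.sum_nonneg fun _ _ => sq_nonneg _)

lemma add {v : E →ₗ[ℝ] Z} {G' : ℝ} (hu : HilbertFactorBound QE QZ u G)
    (hv : HilbertFactorBound QE QZ v G') :
    HilbertFactorBound QE QZ (u + v) (2 * QZ.k ^ 2 * (G + G')) where
  nonneg := mul_nonneg (by positivity) (add_nonneg hu.nonneg hv.nonneg)
  sum_sq_le ι κ _ _ a ha x :=
    calc ∑ i, QZ.q ((u + v) (∑ j, a i j • x j)) ^ 2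
        ≤ ∑ i, 2 * QZ.k ^ 2 *
            (QZ.q (u (∑ j, a i j • x j)) ^ 2 + QZ.q (v (∑ j, a i j • x j)) ^ 2) :=
          Finset.sum_le_sum fun i _ => QZ.q_add_sq_le _ _
      _ ≤ 2 * QZ.k ^ 2 * (G * ∑ j, QE.q (x j) ^ 2 + G' * ∑ j, QE.q (x j) ^ 2) := by
          rw [← Finset.mul_sum, Finset.sum_add_distrib]
          gcongr
          exacts [hu.sum_sq_le a ha x, hv.sum_sq_le a ha x]
      _ = 2 * QZ.k ^ 2 * (G + G') * ∑ j, QE.q (x j) ^ 2 := by ring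

lemma smul (h : HilbertFactorBound QE QZ u G) (r : ℝ) :
    HilbertFactorBound QE QZ (r • u) (r ^ 2 * G) where
  nonneg := mul_nonneg (sq_nonneg r) h.nonneg
  sum_sq_le ι κ _ _ a ha x := by
    simp only [LinearMap.smul_apply, QZ.smul_eq, mul_pow, sq_abs, ← Finset.mul_sum, mul_assoc]
    exact mul_le_mul_of_nonneg_left (h.sum_sq_le a ha x) (sq_nonneg r)

lemma of_tendsto {α : Type*} {l : Filter α} [l.NeBot] {v : α → E →ₗ[ℝ] Z}
    (hv : ∀ᶠ t in l, HilbertFactorBound QE QZ (v t) G)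
    (hlim : ∀ x, Filter.Tendsto (fun t => QZ.q (v t x - u x)) l (nhds 0)) :
    HilbertFactorBound QE QZ u (2 * QZ.k ^ 2 * G) where
  nonneg := mul_nonneg (by positivity) hv.exists.choose_spec.nonneg
  sum_sq_le ι κ _ _ a ha x := by
    let y (i : ι) : E := ∑ j, a i j • x j
    have hbound : ∀ᶠ t in l, ∑ i, QZ.q (u (y i)) ^ 2 ≤
        2 * QZ.k ^ 2 * (G * ∑ j, QE.q (x j) ^ 2 + ∑ i, QZ.q (v t (y i) - u (y i)) ^ 2) := by
      filter_upwards [hv] with t ht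
      calc ∑ i, QZ.q (u (y i)) ^ 2
          ≤ ∑ i, 2 * QZ.k ^ 2 * (QZ.q (v t (y i)) ^ 2 + QZ.q (v t (y i) - u (y i)) ^ 2) := by
            gcongr with i
            simpa only [neg_sub, add_sub_cancel, ← QZ.q_neg (v t (y i) - u (y i))] using
              QZ.q_add_sq_le (v t (y i)) (u (y i) - v t (y i))
        _ ≤ 2 * QZ.k ^ 2 *
            (G * ∑ j, QE.q (x j) ^ 2 + ∑ i, QZ.q (v t (y i) - u (y i)) ^ 2) := by
            rw [← Finset.mul_sum, Finset.sum_add_distrib]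
            gcongr
            exact ht.sum_sq_le a ha x
    have hsum : Filter.Tendsto (fun t => 2 * QZ.k ^ 2 *
        (G * ∑ j, QE.q (x j) ^ 2 + ∑ i, QZ.q (v t (y i) - u (y i)) ^ 2)) l
        (nhds (2 * QZ.k ^ 2 * (G * ∑ j, QE.q (x j) ^ 2 + ∑ _i : ι, 0 ^ 2))) :=
      ((tendsto_finsetSum _ fun i _ => (hlim (y i)).pow 2).const_add _).const_mul _
    refine (ge_of_tendsto hsum hbound).trans_eq ?_
    simp [mul_assoc]

/-- The set of admissible constants is closed, so the optimal one is admissible. -/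
lemma exists_least (h : HilbertFactorBound QE QZ u G) :
    ∃ G₀, HilbertFactorBound QE QZ u G₀ ∧ ∀ G', HilbertFactorBound QE QZ u G' → G₀ ≤ G' := by
  have hbdd : BddBelow {G' | HilbertFactorBound QE QZ u G'} := ⟨0, fun G' h' => h'.nonneg⟩
  refine ⟨sInf {G' | HilbertFactorBound QE QZ u G'},
    ⟨le_csInf ⟨G, h⟩ fun G' h' => h'.nonneg, fun ι κ _ _ a ha x => ?_⟩,
    fun G' h' => csInf_le hbdd h'⟩
  have hcont : Continuous fun ε => (sInf {G' | HilbertFactorBound QE QZ u G'} + ε) *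
      ∑ j, QE.q (x j) ^ 2 := by fun_prop
  simpa only [add_zero] using le_apply_zero_of_forall_pos hcont fun ε hε => by
    obtain ⟨G', h', hlt⟩ := exists_lt_of_csInf_lt ⟨G, h⟩ (lt_add_of_pos_right _ hε)
    exact (h'.mono hlt.le).sum_sq_le a ha x

end HilbertFactorBound

end HilbertFactor

section Sampling

section Moments

variable {ι : Type*} [Fintype ι] {w : ι → ℝ}

lemma sum_prod_apply_eq_one (hw1 : ∑ i, w i = 1) (m : ℕ) :
    ∑ ω : Fin m → ι, ∏ r, w (ω r) = 1 := by
  rw [← Fintype.sum_pow, hw1, one_pow]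

lemma sum_prod_mul_add_sum_sq (hw1 : ∑ i, w i = 1) {g : ι → ℝ} (hg : ∑ i, w i * g i = 0) (m : ℕ)
    (S : ℝ) :
    ∑ ω : Fin m → ι, (∏ r, w (ω r)) * (S + ∑ r, g (ω r)) ^ 2 =
      S ^ 2 + m * ∑ i, w i * g i ^ 2 := by
  induction m generalizing S with
  | zero => simp
  | succ m ih =>
    have hstep : ∑ i, w i * (S + g i) ^ 2 = S ^ 2 + ∑ i, w i * g i ^ 2 := by
      have hexpand : ∀ i, w i * (S + g i) ^ 2 =
          w i * S ^ 2 + 2 * S * (w i * g i) + w i * g i ^ 2 := fun i => by ring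
      simp only [hexpand, Finset.sum_add_distrib, ← Finset.sum_mul, ← Finset.mul_sum, hw1, hg]
      ring
    rw [← (Fin.consEquiv fun _ => ι).sum_comp, Fintype.sum_prod_type]
    simp only [Fin.consEquiv, Equiv.coe_fn_mk, Fin.prod_univ_succ, Fin.sum_univ_succ,
      Fin.cons_zero, Fin.cons_succ, ← add_assoc, mul_assoc, ← Finset.mul_sum, ih]
    rw [Nat.cast_succ]
    simp only [mul_add (w _), Finset.sum_add_distrib, ← Finset.sum_mul, hstep, hw1]
    ring

variable [DecidableEq ι]

/-- The deviation, along the sample `ω`, of the law `w` from its empirical law. -/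
noncomputable def empiricalDeviation {m : ℕ} (w : ι → ℝ) : Matrix (Fin m → ι) ι ℝ :=
  Matrix.of fun ω l => w l - (m : ℝ)⁻¹ * ∑ r, if ω r = l then 1 else 0

lemma sum_empiricalDeviation_smul {m : ℕ} {F : Type*} [AddCommGroup F] [Module ℝ F]
    (w : ι → ℝ) (x : ι → F) (ω : Fin m → ι) :
    ∑ l, empiricalDeviation w ω l • x l = ∑ l, w l • x l - (m : ℝ)⁻¹ • ∑ r, x (ω r) := by
  simp only [empiricalDeviation, Matrix.of_apply, sub_smul, Finset.sum_sub_distrib, mul_smul,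
    ← Finset.smul_sum, Finset.sum_smul]
  rw [Finset.sum_comm]
  simp

lemma sum_prod_mul_empiricalDeviation_sq_le (hw1 : ∑ i, w i = 1) {m : ℕ} (hm : m ≠ 0)
    (v : ι → ℝ) :
    ∑ ω : Fin m → ι, (∏ r, w (ω r)) * (∑ l, empiricalDeviation w ω l * v l) ^ 2 ≤
      (m : ℝ)⁻¹ * ∑ l, w l * v l ^ 2 := by
  have hm' : (m : ℝ) ≠ 0 := Nat.cast_ne_zero.2 hm
  set S := ∑ l, w l * v l with hS
  have hmean : ∑ i, w i * (S - v i) = 0 := by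
    simp only [mul_sub, Finset.sum_sub_distrib, ← Finset.sum_mul, hw1, one_mul, ← hS, sub_self]
  have hdev : ∀ ω : Fin m → ι,
      ∑ l, empiricalDeviation w ω l * v l = (m : ℝ)⁻¹ * (0 + ∑ r, (S - v (ω r))) := fun ω => by
    refine (sum_empiricalDeviation_smul w v ω).trans ?_
    simp only [smul_eq_mul, ← hS, Finset.sum_sub_distrib, Finset.sum_const, Finset.card_univ,
      Fintype.card_fin, nsmul_eq_mul]
    field_simp
    ring
  have hvariance : ∑ i, w i * (S - v i) ^ 2 = ∑ l, w l * v l ^ 2 - S ^ 2 := by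
    have hexpand : ∀ i, w i * (S - v i) ^ 2 =
        w i * S ^ 2 - 2 * S * (w i * v i) + w i * v i ^ 2 := fun i => by ring
    simp only [hexpand, Finset.sum_add_distrib, Finset.sum_sub_distrib, ← Finset.sum_mul,
      ← Finset.mul_sum, hw1, ← hS]
    ring
  calc ∑ ω : Fin m → ι, (∏ r, w (ω r)) * (∑ l, empiricalDeviation w ω l * v l) ^ 2
      = (m : ℝ)⁻¹ ^ 2 * ∑ ω : Fin m → ι, (∏ r, w (ω r)) * (0 + ∑ r, (S - v (ω r))) ^ 2 := by
        simp only [hdev, mul_pow _ _ 2, Finset.mul_sum, mul_left_comm]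
    _ = (m : ℝ)⁻¹ * (∑ l, w l * v l ^ 2 - S ^ 2) := by
        rw [sum_prod_mul_add_sum_sq hw1 hmean, hvariance]
        field_simp
        ring
    _ ≤ (m : ℝ)⁻¹ * ∑ l, w l * v l ^ 2 := by
        gcongr
        exact sub_le_self _ (sq_nonneg S)

end Moments

variable {E : Type uE} {Z : Type uZ} [AddCommGroup E] [Module ℝ E] [AddCommGroup Z] [Module ℝ Z]

lemma SqOpNormLe.of_weighted {ι κ : Type*} [Fintype ι] [Fintype κ] {b : Matrix ι κ ℝ}
    {p : ι → ℝ} {w : κ → ℝ} {c : ℝ} (hp : ∀ i, 0 ≤ p i) (hw : ∀ j, 0 < w j)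
    (hb : ∀ v : κ → ℝ, ∑ i, p i * (∑ j, b i j * v j) ^ 2 ≤ c * ∑ j, w j * v j ^ 2) :
    SqOpNormLe (Matrix.of fun i j => √(p i) * b i j * (√(w j))⁻¹) c := by
  intro v
  have hv := hb fun j => (√(w j))⁻¹ * v j
  simp only [mul_pow, inv_pow, Real.sq_sqrt (hw _).le, mul_inv_cancel_left₀ (hw _).ne'] at hv
  simpa only [Matrix.of_apply, mul_assoc, ← Finset.mul_sum, mul_pow, Real.sq_sqrt (hp _)] using hv

namespace HilbertFactorBound

variable {QE : QuasiNormOn E} {QZ : QuasiNormOn Z} {u : E →ₗ[ℝ] Z} {G M : ℝ}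

lemma sum_weighted_sq_le (h : HilbertFactorBound QE QZ u G) {ι κ : Type} [Fintype ι] [Fintype κ]
    {b : Matrix ι κ ℝ} {p : ι → ℝ} {w : κ → ℝ} {c : ℝ} (hc : 0 < c) (hp : ∀ i, 0 ≤ p i)
    (hw : ∀ j, 0 < w j)
    (hb : ∀ v : κ → ℝ, ∑ i, p i * (∑ j, b i j * v j) ^ 2 ≤ c * ∑ j, w j * v j ^ 2) (x : κ → E) :
    ∑ i, p i * QZ.q (u (∑ j, b i j • x j)) ^ 2 ≤ c * G * ∑ j, w j * QE.q (x j) ^ 2 := by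
  have hx := h.sum_sq_le_mul hc (SqOpNormLe.of_weighted hp hw hb) fun j => √(w j) • x j
  simp only [Matrix.of_apply, smul_smul, mul_assoc, inv_mul_cancel₀ (Real.sqrt_pos.2 (hw _)).ne',
    mul_one, QE.smul_eq, mul_pow, sq_abs, Real.sq_sqrt (hw _).le] at hx
  simpa only [← smul_smul, ← Finset.smul_sum, map_smul, QZ.smul_eq, mul_pow, sq_abs,
    Real.sq_sqrt (hp _), mul_assoc] using hx

lemma exists_sample_apply_sq_le (h : HilbertFactorBound QE QZ u G) {m : ℕ} (hm : m ≠ 0)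
    {ι : Type} [Fintype ι] [DecidableEq ι] {w : ι → ℝ} (hw : ∀ i, 0 < w i) (hw1 : ∑ i, w i = 1)
    {x : ι → E} {ρ : ℝ} (hx : ∀ i, QE.q (x i) ≤ ρ) :
    ∃ ω : Fin m → ι, QZ.q (u (∑ l, empiricalDeviation w ω l • x l)) ^ 2 ≤ G / m * ρ ^ 2 := by
  have hm' : (0 : ℝ) < m := Nat.cast_pos.2 (Nat.pos_of_ne_zero hm)
  have hG := h.nonneg
  let p (ω : Fin m → ι) : ℝ := ∏ r, w (ω r)
  have hp (ω : Fin m → ι) : 0 < p ω := Finset.prod_pos fun r _ => hw _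
  have hp1 : ∑ ω, p ω = 1 := sum_prod_apply_eq_one hw1 m
  have hmean : ∑ ω, p ω * QZ.q (u (∑ l, empiricalDeviation w ω l • x l)) ^ 2 ≤
      ∑ ω, p ω * (G / m * ρ ^ 2) :=
    calc ∑ ω, p ω * QZ.q (u (∑ l, empiricalDeviation w ω l • x l)) ^ 2
        ≤ (m : ℝ)⁻¹ * G * ∑ l, w l * QE.q (x l) ^ 2 :=
          h.sum_weighted_sq_le (inv_pos.2 hm') (fun ω => (hp ω).le) hw
            (sum_prod_mul_empiricalDeviation_sq_le hw1 hm) x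
      _ ≤ (m : ℝ)⁻¹ * G * ∑ l, w l * ρ ^ 2 := by
          gcongr with l
          exacts [(hw l).le, QE.nonneg _, hx l]
      _ = ∑ ω, p ω * (G / m * ρ ^ 2) := by
          rw [← Finset.sum_mul, ← Finset.sum_mul, hw1, hp1, div_eq_inv_mul]
          ring
  obtain ⟨i₀⟩ : Nonempty ι := by
    by_contra hι
    rw [not_nonempty_iff] at hι
    simp at hw1
  obtain ⟨ω, -, hω⟩ := Finset.exists_le_of_sum_le ⟨fun _ => i₀, Finset.mem_univ _⟩ hmean
  exact ⟨ω, le_of_mul_le_mul_left hω (hp ω)⟩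

/-- Maurey's empirical method: a convex combination is replaced by the average of `m` of its
points, at an error controlled by `G / m`. -/
lemma apply_convexCombination_sq_le (h : HilbertFactorBound QE QZ u G)
    (hM : 0 ≤ M) (hu : OpBoundedBy QE.q QZ.q u M) {m : ℕ} (hm : m ≠ 0) {ι : Type} [Fintype ι]
    {w : ι → ℝ} (hw : ∀ i, 0 < w i) (hw1 : ∑ i, w i = 1) {x : ι → E} {ρ : ℝ}
    (hx : ∀ i, QE.q (x i) ≤ ρ) :
    QZ.q (u (∑ i, w i • x i)) ^ 2 ≤ 2 * QZ.k ^ 2 * (G / m + (M * QE.k ^ m) ^ 2) * ρ ^ 2 := by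
  classical
  obtain ⟨ω, hω⟩ := h.exists_sample_apply_sq_le hm hw hw1 hx
  have haverage : QZ.q (u ((m : ℝ)⁻¹ • ∑ r, x (ω r))) ≤ M * (QE.k ^ m * ρ) :=
    (hu _).trans (mul_le_mul_of_nonneg_left (QE.q_average_le hm fun r => hx (ω r)) hM)
  calc QZ.q (u (∑ i, w i • x i)) ^ 2
      = QZ.q (u (∑ l, empiricalDeviation w ω l • x l) + u ((m : ℝ)⁻¹ • ∑ r, x (ω r))) ^ 2 := by
        rw [← map_add, sum_empiricalDeviation_smul, sub_add_cancel]
    _ ≤ 2 * QZ.k ^ 2 * (G / m * ρ ^ 2 + (M * (QE.k ^ m * ρ)) ^ 2) := by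
        refine (QZ.q_add_sq_le _ _).trans ?_
        gcongr
        exact QZ.nonneg _
    _ = 2 * QZ.k ^ 2 * (G / m + (M * QE.k ^ m) ^ 2) * ρ ^ 2 := by ring

lemma apply_sq_le_of_opBoundedBy (h : HilbertFactorBound QE QZ u G) (hM : 0 ≤ M)
    (hu : OpBoundedBy QE.q QZ.q u M) {m : ℕ} (hm : m ≠ 0) (x : E) :
    QZ.q (u x) ^ 2 ≤ 2 * QZ.k ^ 2 * (G / m + (M * QE.k ^ m) ^ 2) * QE.envelope x ^ 2 := by
  have hcont : Continuous fun ε : ℝ =>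
    2 * QZ.k ^ 2 * (G / m + (M * QE.k ^ m) ^ 2) * (QE.envelope x + ε) ^ 2 := by fun_prop
  simpa only [add_zero] using le_apply_zero_of_forall_pos hcont fun ε hε => by
    obtain ⟨n, w, z, hw, hw1, hz, hx⟩ :=
      QE.exists_of_envelope_lt (lt_add_of_pos_right (QE.envelope x) hε)
    simpa only [hx] using h.apply_convexCombination_sq_le hM hu hm hw hw1 hz

end HilbertFactorBound

end Sampling

section Walsh

lemma rsign_sq (b : Bool) : rsign b ^ 2 = 1 := by cases b <;> simp [rsign]

lemma abs_rsign (b : Bool) : |rsign b| = 1 := by cases b <;> simp [rsign]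

section WalshMultiplier

variable {ι : Type*}

/-- The Walsh characters of the cube `{-1, 1}^ι`. -/
noncomputable def walsh (A : Finset ι) (t : ι → Bool) : ℝ := ∏ j ∈ A, rsign (t j)

variable [Fintype ι]

/-- The operator on functions on the cube multiplying the `A`-th Walsh coefficient by `c A`. -/
noncomputable def walshMultiplier (c : Finset ι → ℝ) : Matrix (ι → Bool) (ι → Bool) ℝ :=
  Matrix.of fun t s => (2 ^ Fintype.card ι)⁻¹ * ∑ A, c A * (walsh A t * walsh A s)

lemma walshMultiplier_comm (c : Finset ι → ℝ) (t s : ι → Bool) :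
    walshMultiplier c t s = walshMultiplier c s t := by
  simp only [walshMultiplier, Matrix.of_apply, mul_comm (walsh _ t)]

lemma walshMultiplier_smul (r : ℝ) (c : Finset ι → ℝ) :
    walshMultiplier (r • c) = r • walshMultiplier c := by
  ext t s
  simp only [walshMultiplier, Matrix.of_apply, Matrix.smul_apply, Pi.smul_apply, smul_eq_mul,
    mul_assoc, ← Finset.mul_sum]
  ring

lemma walshMultiplier_sub (c c' : Finset ι → ℝ) :
    walshMultiplier (c - c') = walshMultiplier c - walshMultiplier c' := by
  ext t s
  simp only [walshMultiplier, Matrix.of_apply, Matrix.sub_apply, Pi.sub_apply, sub_mul,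
    Finset.sum_sub_distrib, mul_sub]

variable [DecidableEq ι]

lemma sum_walsh_mul_walsh (A B : Finset ι) :
    ∑ t : ι → Bool, walsh A t * walsh B t = if A = B then 2 ^ Fintype.card ι else 0 := by
  have hfactor : ∑ t : ι → Bool, walsh A t * walsh B t =
      ∏ j, ∑ b, (if j ∈ A then rsign b else 1) * (if j ∈ B then rsign b else 1) := by
    simp only [walsh, Fintype.prod_sum, Finset.prod_mul_distrib, Finset.prod_ite_mem,
      Finset.univ_inter]
  rw [hfactor]
  split_ifs with hAB
  · subst hAB
    have htwo : ∀ j, ∑ b, (if j ∈ A then rsign b else 1) * (if j ∈ A then rsign b else 1) = 2 :=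
      fun j => by simp only [← sq]; split_ifs <;> simp [rsign_sq]
    simp only [htwo, Finset.prod_const, Finset.card_univ]
  · obtain ⟨j, hj⟩ : ∃ j, ¬(j ∈ A ↔ j ∈ B) := by
      by_contra! hmem
      exact hAB (Finset.ext hmem)
    refine Finset.prod_eq_zero (Finset.mem_univ j) ?_
    by_cases hA : j ∈ A <;> by_cases hB : j ∈ B <;> simp_all [rsign]

lemma sum_sum_mul_walsh_sq (c : Finset ι → ℝ) :
    ∑ t : ι → Bool, (∑ A, c A * walsh A t) ^ 2 = 2 ^ Fintype.card ι * ∑ A, c A ^ 2 :=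
  calc ∑ t : ι → Bool, (∑ A, c A * walsh A t) ^ 2
      = ∑ A, ∑ B, c A * c B * ∑ t : ι → Bool, walsh A t * walsh B t := by
        simp only [sq, Finset.sum_mul_sum]
        rw [Finset.sum_comm]
        refine Finset.sum_congr rfl fun A _ => Finset.sum_comm.trans ?_
        simp only [mul_mul_mul_comm, Finset.mul_sum]
    _ = 2 ^ Fintype.card ι * ∑ A, c A ^ 2 := by
        simp only [sum_walsh_mul_walsh, mul_ite, mul_zero, Finset.sum_ite_eq, Finset.mem_univ,
          if_true, sq, ← Finset.sum_mul, mul_comm (2 ^ _ : ℝ)]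

lemma sum_sq_sum_walsh_mul_le (v : (ι → Bool) → ℝ) :
    ∑ A, (∑ s, walsh A s * v s) ^ 2 ≤ 2 ^ Fintype.card ι * ∑ s, v s ^ 2 := by
  set c : Finset ι → ℝ := fun A => ∑ s, walsh A s * v s with hc
  have hself : ∑ A, c A ^ 2 = ∑ s, (∑ A, c A * walsh A s) * v s := by
    simp only [sq, Finset.sum_mul]
    rw [Finset.sum_comm]
    refine Finset.sum_congr rfl fun A _ => ?_
    conv_lhs => enter [2]; rw [hc]
    simp only [Finset.mul_sum, mul_assoc]
  have hCS : (∑ A, c A ^ 2) * (∑ A, c A ^ 2) ≤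
      2 ^ Fintype.card ι * (∑ s, v s ^ 2) * (∑ A, c A ^ 2) := by
    have h := Finset.sum_mul_sq_le_sq_mul_sq Finset.univ (fun s => ∑ A, c A * walsh A s) v
    rw [← hself, sum_sum_mul_walsh_sq] at h
    linarith
  rcases (Finset.sum_nonneg fun A _ => sq_nonneg (c A) : 0 ≤ ∑ A, c A ^ 2).eq_or_lt with h0 | h0
  · rw [← h0]
    exact mul_nonneg (by positivity) (Finset.sum_nonneg fun s _ => sq_nonneg (v s))
  · exact le_of_mul_le_mul_right hCS h0

lemma sum_walshMultiplier (c : Finset ι → ℝ) (t : ι → Bool) :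
    ∑ s, walshMultiplier c t s = c ∅ := by
  have hsum : ∀ A : Finset ι, ∑ s, walsh A s = if A = ∅ then 2 ^ Fintype.card ι else 0 :=
    fun A => by simpa [walsh] using sum_walsh_mul_walsh A ∅
  simp only [walshMultiplier, Matrix.of_apply, ← Finset.mul_sum]
  rw [Finset.sum_comm]
  simp only [← Finset.mul_sum, hsum, mul_ite, mul_zero, Finset.sum_ite_eq', Finset.mem_univ,
    if_true]
  simp only [walsh, Finset.prod_empty, one_mul]
  field_simp

lemma sqOpNormLe_walshMultiplier {c : Finset ι → ℝ} {K : ℝ} (hc : ∀ A, c A ^ 2 ≤ K) :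
    SqOpNormLe (walshMultiplier c) K := by
  intro v
  have hcoef : ∀ t, ∑ s, walshMultiplier c t s * v s =
      (2 ^ Fintype.card ι)⁻¹ * ∑ A, c A * (∑ s, walsh A s * v s) * walsh A t := fun t => by
    simp only [walshMultiplier, Matrix.of_apply, Finset.mul_sum, Finset.sum_mul]
    rw [Finset.sum_comm]
    exact Finset.sum_congr rfl fun A _ => Finset.sum_congr rfl fun s _ => by ring
  have hK : 0 ≤ K := (sq_nonneg _).trans (hc ∅)
  calc ∑ t, (∑ s, walshMultiplier c t s * v s) ^ 2
      = (2 ^ Fintype.card ι)⁻¹ * ∑ A, c A ^ 2 * (∑ s, walsh A s * v s) ^ 2 := by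
        simp only [hcoef, mul_pow, ← Finset.mul_sum, sum_sum_mul_walsh_sq]
        field_simp
    _ ≤ (2 ^ Fintype.card ι)⁻¹ * ∑ A, K * (∑ s, walsh A s * v s) ^ 2 := by
        gcongr with A
        exact hc A
    _ ≤ (2 ^ Fintype.card ι)⁻¹ * (K * (2 ^ Fintype.card ι * ∑ s, v s ^ 2)) := by
        rw [← Finset.mul_sum]
        gcongr
        exact sum_sq_sum_walsh_mul_le v
    _ = K * ∑ s, v s ^ 2 := by field_simp

end WalshMultiplier

section RieszKernel

variable {ι : Type*} [Fintype ι]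

/-- The noise operator, whose kernel is a Riesz product. -/
noncomputable def rieszKernel (ι : Type*) [Fintype ι] (d : ℝ) : Matrix (ι → Bool) (ι → Bool) ℝ :=
  walshMultiplier fun A => d ^ A.card

lemma rieszKernel_apply (d : ℝ) (t s : ι → Bool) :
    rieszKernel ι d t s =
      (2 ^ Fintype.card ι)⁻¹ * ∏ j, (1 + d * (rsign (t j) * rsign (s j))) := by
  simp only [rieszKernel, walshMultiplier, Matrix.of_apply, walsh, Finset.prod_one_add,
    Finset.prod_mul_distrib, Finset.prod_const, Finset.powerset_univ]

lemma rieszKernel_nonneg {d : ℝ} (hd : |d| ≤ 1) (t s : ι → Bool) : 0 ≤ rieszKernel ι d t s := by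
  rw [rieszKernel_apply]
  refine mul_nonneg (by positivity) (Finset.prod_nonneg fun j _ => ?_)
  have habs : |d * (rsign (t j) * rsign (s j))| ≤ 1 := by
    simpa only [abs_mul, abs_rsign, mul_one] using hd
  linarith [(abs_le.1 habs).1]

/-- The projection onto the span of the Rademacher functions. -/
noncomputable def rademacherProjection (ι : Type*) [Fintype ι] :
    Matrix (ι → Bool) (ι → Bool) ℝ :=
  walshMultiplier fun A => if A.card = 1 then 1 else 0

lemma rademacherProjection_apply (t s : ι → Bool) :
    rademacherProjection ι t s = (2 ^ Fintype.card ι)⁻¹ * ∑ j, rsign (t j) * rsign (s j) := by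
  simp only [rademacherProjection, walshMultiplier, Matrix.of_apply, ite_mul, one_mul, zero_mul,
    ← Finset.sum_filter, Finset.univ_filter_card_eq, Finset.powersetCard_one, Finset.sum_map,
    Function.Embedding.coeFn_mk, walsh, Finset.prod_singleton]

/-- The normalised odd part of the Riesz kernel: it agrees with the Rademacher projection on
Walsh characters of degree at most two, and multiplies those of degree `k` by at most `d ^ (k - 1)`.
-/
noncomputable def oddRieszKernel (ι : Type*) [Fintype ι] (d : ℝ) :
    Matrix (ι → Bool) (ι → Bool) ℝ :=
  (2 * d)⁻¹ • (rieszKernel ι d - rieszKernel ι (-d))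

lemma oddRieszKernel_comm (d : ℝ) (t s : ι → Bool) :
    oddRieszKernel ι d t s = oddRieszKernel ι d s t := by
  simp only [oddRieszKernel, Matrix.smul_apply, Matrix.sub_apply, rieszKernel,
    walshMultiplier_comm _ t s]

variable [DecidableEq ι]

lemma sum_rieszKernel (d : ℝ) (t : ι → Bool) : ∑ s, rieszKernel ι d t s = 1 :=
  (sum_walshMultiplier _ t).trans (pow_zero d)

lemma sum_abs_oddRieszKernel_le {d : ℝ} (hd : 0 < d) (hd1 : d ≤ 1) (t : ι → Bool) :
    ∑ s, |oddRieszKernel ι d t s| ≤ d⁻¹ := by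
  have hpos : |d| ≤ 1 := by rwa [abs_of_pos hd]
  have hneg : |-d| ≤ 1 := by rwa [abs_neg]
  calc ∑ s, |oddRieszKernel ι d t s|
      ≤ ∑ s, (2 * d)⁻¹ * (rieszKernel ι d t s + rieszKernel ι (-d) t s) := by
        refine Finset.sum_le_sum fun s _ => ?_
        rw [oddRieszKernel, Matrix.smul_apply, Matrix.sub_apply, smul_eq_mul, abs_mul,
          abs_of_pos (by positivity)]
        gcongr
        simpa only [abs_of_nonneg (rieszKernel_nonneg hpos t s),
          abs_of_nonneg (rieszKernel_nonneg hneg t s)] using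
          abs_sub (rieszKernel ι d t s) (rieszKernel ι (-d) t s)
    _ = d⁻¹ := by
        rw [← Finset.mul_sum, Finset.sum_add_distrib, sum_rieszKernel, sum_rieszKernel]
        field_simp
        norm_num

lemma sq_odd_part_pow_sub_le {d : ℝ} (hd : 0 < d) (hd1 : d ≤ 1) (k : ℕ) :
    ((if k = 1 then 1 else 0) - (2 * d)⁻¹ * (d ^ k - (-d) ^ k)) ^ 2 ≤ d ^ 4 := by
  rcases k.even_or_odd with hk | ⟨l, rfl⟩
  · have hk1 : k ≠ 1 := by rintro rfl; exact absurd hk (by decide)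
    rw [hk.neg_pow, if_neg hk1]
    simpa using (pow_pos hd 4).le
  · rw [(odd_two_mul_add_one l).neg_pow]
    rcases l with _ | l
    · have hone : (1 : ℝ) - (2 * d)⁻¹ * (d ^ 1 - -d ^ 1) = 0 := by field_simp; ring
      rw [mul_zero, zero_add, if_pos rfl, hone, zero_pow two_ne_zero]
      positivity
    · have hpow : (2 * d)⁻¹ * (d ^ (2 * (l + 1) + 1) - -d ^ (2 * (l + 1) + 1)) =
          d ^ 2 * d ^ (2 * l) := by field_simp; ring
      rw [if_neg (by lia), hpow, zero_sub, neg_sq, mul_pow, ← pow_mul]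
      exact mul_le_of_le_one_right (by positivity) (pow_le_one₀ (by positivity)
        (pow_le_one₀ hd.le hd1))

lemma sqOpNormLe_rademacherProjection_sub_oddRieszKernel {d : ℝ} (hd : 0 < d) (hd1 : d ≤ 1) :
    SqOpNormLe (rademacherProjection ι - oddRieszKernel ι d) (d ^ 4) := by
  rw [rademacherProjection, oddRieszKernel, rieszKernel, rieszKernel, ← walshMultiplier_sub,
    ← walshMultiplier_smul, ← walshMultiplier_sub]
  exact sqOpNormLe_walshMultiplier fun A => sq_odd_part_pow_sub_le hd hd1 A.card

end RieszKernel

variable {E : Type uE} {Z : Type uZ} [AddCommGroup E] [Module ℝ E] [AddCommGroup Z] [Module ℝ Z]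

/-- The Schur test, for seminorm-valued functions. -/
lemma sum_seminorm_sum_smul_sq_le (p : Seminorm ℝ E) {ι κ : Type*} [Fintype ι] [Fintype κ]
    {a : Matrix ι κ ℝ} {c : ℝ} (hrow : ∀ i, ∑ j, |a i j| ≤ c) (hcol : ∀ j, ∑ i, |a i j| ≤ c)
    (F : κ → E) : ∑ i, p (∑ j, a i j • F j) ^ 2 ≤ c ^ 2 * ∑ j, p (F j) ^ 2 := by
  have hentry : ∀ i, p (∑ j, a i j • F j) ^ 2 ≤ c * ∑ j, |a i j| * p (F j) ^ 2 := fun i =>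
    calc p (∑ j, a i j • F j) ^ 2 ≤ (∑ j, |a i j| * p (F j)) ^ 2 := by
          gcongr
          simpa only [map_smul_eq_mul, Real.norm_eq_abs] using
            Finset.le_sum_of_subadditive p (map_zero p).le (map_add_le_add p) Finset.univ
              fun j => a i j • F j
      _ ≤ (∑ j, |a i j|) * ∑ j, |a i j| * p (F j) ^ 2 :=
          Finset.sum_sq_le_sum_mul_sum_of_sq_le_mul _ (fun j _ => abs_nonneg _)
            (fun j _ => by positivity) fun j _ => by
              rw [mul_pow, sq |a i j|, mul_assoc]
      _ ≤ c * ∑ j, |a i j| * p (F j) ^ 2 := by gcongr; exact hrow i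
  calc ∑ i, p (∑ j, a i j • F j) ^ 2 ≤ c * ∑ j, (∑ i, |a i j|) * p (F j) ^ 2 := by
        refine (Finset.sum_le_sum fun i _ => hentry i).trans_eq ?_
        rw [← Finset.mul_sum, Finset.sum_comm]
        simp only [Finset.sum_mul]
    _ ≤ c * ∑ j, c * p (F j) ^ 2 := by
        rcases isEmpty_or_nonempty ι with _ | ⟨⟨i⟩⟩
        · simp only [Finset.univ_eq_empty, Finset.sum_empty, zero_mul, Finset.sum_const_zero,
            mul_zero, ← Finset.mul_sum, ← mul_assoc]
          exact mul_nonneg (mul_self_nonneg c) (Finset.sum_nonneg fun j _ => sq_nonneg _)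
        · have hc : 0 ≤ c := (Finset.sum_nonneg fun j _ => abs_nonneg (a i j)).trans (hrow i)
          gcongr with j
          exact hcol j
    _ = c ^ 2 * ∑ j, p (F j) ^ 2 := by rw [← Finset.mul_sum, sq, mul_assoc]

lemma sum_rademacherProjection_smul {ι : Type*} [Fintype ι] [DecidableEq ι] (F : (ι → Bool) → E)
    (t : ι → Bool) :
    ∑ s, rademacherProjection ι t s • F s =
      ∑ j, rsign (t j) • (2 ^ Fintype.card ι : ℝ)⁻¹ • ∑ s, rsign (s j) • F s := by
  simp only [rademacherProjection_apply, Finset.mul_sum, Finset.sum_smul, Finset.smul_sum,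
    smul_smul]
  rw [Finset.sum_comm]
  exact Finset.sum_congr rfl fun j _ => Finset.sum_congr rfl fun s _ => by ring_nf

/-- The Rademacher projection is the odd Riesz kernel, to which the Schur test and Maurey's bound
apply, up to an operator of Hilbert space norm `d ^ 2`, to which the criterion applies. -/
lemma HilbertFactorBound.sum_rademacherProjection_sq_le {QE : QuasiNormOn E} {QZ : QuasiNormOn Z}
    {u : E →ₗ[ℝ] Z} {G L d : ℝ} (h : HilbertFactorBound QE QZ u G) (hL : 0 ≤ L)
    (hu : ∀ x, QZ.q (u x) ^ 2 ≤ L * QE.envelope x ^ 2) (hd : 0 < d) (hd1 : d ≤ 1)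
    {ι : Type} [Fintype ι] [DecidableEq ι] (F : (ι → Bool) → E) :
    ∑ t, QZ.q (u (∑ s, rademacherProjection ι t s • F s)) ^ 2 ≤
      2 * QZ.k ^ 2 * (L * (d ^ 2)⁻¹ + d ^ 4 * G) * ∑ s, QE.envelope (F s) ^ 2 := by
  have hsplit : ∀ t, ∑ s, rademacherProjection ι t s • F s =
      ∑ s, oddRieszKernel ι d t s • F s +
        ∑ s, (rademacherProjection ι - oddRieszKernel ι d) t s • F s := fun t => by
    simp only [← Finset.sum_add_distrib, ← add_smul, Matrix.sub_apply, add_sub_cancel]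
  have hodd : ∑ t, QZ.q (u (∑ s, oddRieszKernel ι d t s • F s)) ^ 2 ≤
      L * ((d ^ 2)⁻¹ * ∑ s, QE.envelope (F s) ^ 2) :=
    calc ∑ t, QZ.q (u (∑ s, oddRieszKernel ι d t s • F s)) ^ 2
        ≤ L * ∑ t, QE.envelope (∑ s, oddRieszKernel ι d t s • F s) ^ 2 := by
          rw [Finset.mul_sum]
          exact Finset.sum_le_sum fun t _ => hu _
      _ ≤ L * ((d ^ 2)⁻¹ * ∑ s, QE.envelope (F s) ^ 2) := by
          gcongr
          rw [← inv_pow]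
          refine sum_seminorm_sum_smul_sq_le _ (sum_abs_oddRieszKernel_le hd hd1) (fun s => ?_) F
          simpa only [oddRieszKernel_comm d _ s] using sum_abs_oddRieszKernel_le hd hd1 s
  have herror := h.sum_sq_le_envelope (pow_pos hd 4)
    (sqOpNormLe_rademacherProjection_sub_oddRieszKernel hd hd1) F
  calc ∑ t, QZ.q (u (∑ s, rademacherProjection ι t s • F s)) ^ 2
      ≤ 2 * QZ.k ^ 2 * (∑ t, QZ.q (u (∑ s, oddRieszKernel ι d t s • F s)) ^ 2 +
          ∑ t, QZ.q (u (∑ s,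
            (rademacherProjection ι - oddRieszKernel ι d) t s • F s)) ^ 2) := by
        rw [← Finset.sum_add_distrib, Finset.mul_sum]
        exact Finset.sum_le_sum fun t _ => by
          rw [hsplit, map_add]
          exact QZ.q_add_sq_le _ _
    _ ≤ 2 * QZ.k ^ 2 * (L * ((d ^ 2)⁻¹ * ∑ s, QE.envelope (F s) ^ 2) +
          d ^ 4 * G * ∑ s, QE.envelope (F s) ^ 2) := by gcongr
    _ = 2 * QZ.k ^ 2 * (L * (d ^ 2)⁻¹ + d ^ 4 * G) * ∑ s, QE.envelope (F s) ^ 2 := by ring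

end Walsh

section SignSquareSum

variable {ι κ : Type*} [Fintype ι] [Fintype κ] {V : Type*} [AddCommGroup V] [Module ℝ V]

/-- The sum of `N (∑ᵢ εᵢ xᵢ)²` over all choices of signs. Unlike `radAvg` it is not normalized, and
the index type is arbitrary. -/
noncomputable def signSqSum [DecidableEq ι] (N : V → ℝ) (x : ι → V) : ℝ :=
  ∑ t : ι → Bool, N (∑ i, rsign (t i) • x i) ^ 2

lemma signSqSum_comp_equiv [DecidableEq ι] [DecidableEq κ] (N : V → ℝ) (e : ι ≃ κ) (x : κ → V) :
    signSqSum N (x ∘ e) = signSqSum N x := by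
  refine Fintype.sum_equiv (e.arrowCongr (Equiv.refl Bool)) _ _ fun t => ?_
  rw [← e.sum_comp fun j => rsign (e.arrowCongr (Equiv.refl Bool) t j) • x j]
  simp

lemma two_pow_mul_sum_sq_le_signSqSum {N : V → ℝ} {n : ℕ} {x : Fin n → V} {C : ℝ}
    (h : (∑ i, N (x i) ^ (2 : ℝ)) ^ (1 / 2 : ℝ) ≤ C * radAvg N 2 x) :
    2 ^ n * ∑ i, N (x i) ^ 2 ≤ C ^ 2 * signSqSum N x := by
  simp only [radAvg, Real.rpow_two, ← Real.sqrt_eq_rpow] at h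
  rw [← signSqSum] at h
  have hpow : (0 : ℝ) < 2 ^ n := by positivity
  have hsum : 0 ≤ signSqSum N x := Finset.sum_nonneg fun _ _ => sq_nonneg _
  have hsq : ∑ i, N (x i) ^ 2 ≤ C ^ 2 * ((2 ^ n)⁻¹ * signSqSum N x) := by
    have hle := pow_le_pow_left₀ (Real.sqrt_nonneg _) h 2
    rwa [mul_pow, Real.sq_sqrt (Finset.sum_nonneg fun _ _ => sq_nonneg _),
      Real.sq_sqrt (mul_nonneg (inv_nonneg.2 hpow.le) hsum)] at hle
  calc 2 ^ n * ∑ i, N (x i) ^ 2 ≤ 2 ^ n * (C ^ 2 * ((2 ^ n)⁻¹ * signSqSum N x)) := by gcongr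
    _ = C ^ 2 * signSqSum N x := by field_simp

lemma CotypeConstLe.two_pow_mul_sum_sq_le [DecidableEq ι] {N : V → ℝ} {C : ℝ}
    (h : CotypeConstLe N 2 C) (x : ι → V) :
    2 ^ Fintype.card ι * ∑ i, N (x i) ^ 2 ≤ C ^ 2 * signSqSum N x := by
  let e := (Fintype.equivFin ι).symm
  rw [← signSqSum_comp_equiv N e x, ← e.sum_comp fun i => N (x i) ^ 2]
  exact two_pow_mul_sum_sq_le_signSqSum (h _ (x ∘ e))

end SignSquareSum

section Seminorms

variable {V W : Type*} [AddCommGroup V] [Module ℝ V] [AddCommGroup W] [Module ℝ W]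

/-- The Euclidean sum of copies of a seminorm. -/
noncomputable def l2Seminorm (ι : Type*) [Fintype ι] (p : Seminorm ℝ V) : Seminorm ℝ (ι → V) :=
  Seminorm.of (fun F => ‖WithLp.toLp 2 fun i => p (F i)‖)
    (fun F H => by
      refine le_trans ?_ (norm_add_le _ _)
      simp only [EuclideanSpace.norm_eq, Real.norm_eq_abs, sq_abs, PiLp.add_apply]
      gcongr with i
      exact map_add_le_add p _ _)
    (fun r F => by
      rw [← norm_smul]
      simp only [EuclideanSpace.norm_eq, Real.norm_eq_abs, sq_abs, PiLp.smul_apply, Pi.smul_apply,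
        map_smul_eq_mul, smul_eq_mul, mul_pow])

lemma l2Seminorm_sq {ι : Type*} [Fintype ι] (p : Seminorm ℝ V) (F : ι → V) :
    l2Seminorm ι p F ^ 2 = ∑ i, p (F i) ^ 2 := by
  change ‖WithLp.toLp 2 fun i => p (F i)‖ ^ 2 = _
  simp only [EuclideanSpace.norm_sq_eq, Real.norm_eq_abs, sq_abs]

lemma exists_linearMap_apply_eq_seminorm (p : Seminorm ℝ V) (x : V) :
    ∃ g : V →ₗ[ℝ] ℝ, g x = p x ∧ ∀ y, |g y| ≤ p y := by
  rcases eq_or_ne x 0 with rfl | hx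
  · exact ⟨0, by simp, by simp⟩
  let f : Module.Dual ℝ (Submodule.span ℝ {x}) := p x • (LinearEquiv.coord ℝ V x hx).toLinearMap
  have hf : ∀ y, f y ≤ p y := fun y =>
    calc f y = LinearEquiv.coord ℝ V x hx y * p x := mul_comm _ _
      _ ≤ |LinearEquiv.coord ℝ V x hx y| * p x :=
        mul_le_mul_of_nonneg_right (le_abs_self _) (apply_nonneg p x)
      _ = p (LinearEquiv.coord ℝ V x hx y • x) := by rw [map_smul_eq_mul, Real.norm_eq_abs]
      _ = p y := by rw [LinearEquiv.coord_apply_smul]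
  obtain ⟨g, hgf, hg⟩ := Module.Dual.exists_extension_of_le_seminorm_real _ f hf
  refine ⟨g, (hgf ⟨x, Submodule.mem_span_singleton_self x⟩).trans ?_, hg⟩
  simp only [f, LinearMap.smul_apply, LinearEquiv.coe_coe, LinearEquiv.coord_self, smul_eq_mul,
    mul_one]

open scoped Pointwise

variable (T : V →ₗ[ℝ] W) (p : Seminorm ℝ V)

lemma balanced_image_ball : Balanced ℝ (T '' p.ball 0 1) := by
  rintro a ha _ ⟨_, ⟨v, hv, rfl⟩, rfl⟩
  exact ⟨a • v, p.balanced_ball_zero 1 a ha ⟨v, hv, rfl⟩, map_smul T a v⟩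

lemma map_mem_smul_image_ball {v : V} {r : ℝ} (hr : 0 < r) (hv : p v < r) :
    T v ∈ r • (T '' p.ball 0 1) := by
  have hmem : r⁻¹ • v ∈ p.ball 0 1 := by
    rwa [p.mem_ball_zero, map_smul_eq_mul, Real.norm_of_nonneg (inv_nonneg.2 hr.le),
      inv_mul_lt_one₀ hr]
  exact ⟨T (r⁻¹ • v), ⟨_, hmem, rfl⟩, by simp [smul_smul, hr.ne']⟩

lemma absorbent_image_ball (hT : Function.Surjective T) : Absorbent ℝ (T '' p.ball 0 1) := by
  refine absorbent_of_balanced (balanced_image_ball T p) fun w => ?_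
  obtain ⟨v, rfl⟩ := hT w
  exact ⟨p v + 1, map_mem_smul_image_ball T p (by positivity) (lt_add_one _)⟩

/-- The quotient of a seminorm by a surjective linear map. -/
noncomputable def quotientSeminorm (hT : Function.Surjective T) : Seminorm ℝ W :=
  gaugeSeminorm (balanced_image_ball T p) ((p.convex_ball 0 1).linear_image T)
    (absorbent_image_ball T p hT)

variable (hT : Function.Surjective T)

lemma quotientSeminorm_map_le (v : V) : quotientSeminorm T p hT (T v) ≤ p v := by
  refine le_of_forall_pos_le_add fun ε hε => ?_
  have hpos : 0 < p v + ε := add_pos_of_nonneg_of_pos (apply_nonneg p v) hε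
  exact gauge_le_of_mem hpos.le (map_mem_smul_image_ball T p hpos (lt_add_of_pos_right _ hε))

lemma exists_of_quotientSeminorm_lt {w : W} {r : ℝ} (h : quotientSeminorm T p hT w < r) :
    ∃ v, T v = w ∧ p v < r := by
  obtain ⟨b, hb, hbr, _, ⟨v, hv, rfl⟩, rfl⟩ :=
    exists_lt_of_gauge_lt (absorbent_image_ball T p hT) h
  refine ⟨b • v, map_smul T b v, ?_⟩
  rw [map_smul_eq_mul, Real.norm_of_nonneg hb.le]
  exact (mul_le_of_le_one_right hb.le (p.mem_ball_zero.1 hv).le).trans_lt hbr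

end Seminorms

section DualNorm

variable {E : Type uE} [AddCommGroup E] [Module ℝ E]

lemma dualNorm_nonneg (q : E → ℝ) (f : E →ₗ[ℝ] ℝ) : 0 ≤ dualNorm q f :=
  Real.sInf_nonneg fun _ h => h.1

variable (Q : QuasiNormOn E)

lemma abs_apply_le_dualNorm_mul {f : E →ₗ[ℝ] ℝ} (hf : DualBdd Q.q f) (x : E) :
    |f x| ≤ dualNorm Q.q f * Q.q x := by
  rcases (Q.nonneg x).eq_or_lt with hx | hx
  · simp [(Q.eq_zero_iff x).1 hx.symm, Q.q_zero]
  · rw [← div_le_iff₀ hx]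
    exact le_csInf hf fun M hM => (div_le_iff₀ hx).2 (hM.2 x)

lemma exists_dualNorm_le_apply (f : E →ₗ[ℝ] ℝ) {c : ℝ} (hc : 1 < c) :
    ∃ x, Q.q x ≤ c ∧ dualNorm Q.q f ≤ f x := by
  have hc0 : 0 < c := one_pos.trans hc
  rcases (dualNorm_nonneg Q.q f).eq_or_lt with h0 | hpos
  · exact ⟨0, by simp [Q.q_zero, hc0.le], by simp [← h0]⟩
  have hnot : dualNorm Q.q f / c ∉ {M | 0 ≤ M ∧ ∀ x, |f x| ≤ M * Q.q x} :=
    notMem_of_lt_csInf (div_lt_self hpos hc) ⟨0, fun _ h => h.1⟩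
  obtain ⟨x, hx⟩ : ∃ x, dualNorm Q.q f / c * Q.q x < |f x| := by
    by_contra! hle
    exact hnot ⟨by positivity, hle⟩
  have hfx : 0 < |f x| := (mul_nonneg (by positivity) (Q.nonneg x)).trans_lt hx
  refine ⟨(dualNorm Q.q f / f x) • x, ?_, ?_⟩
  · rw [Q.smul_eq, abs_div, abs_of_pos hpos, div_mul_eq_mul_div, div_le_iff₀ hfx]
    rw [div_mul_eq_mul_div, div_lt_iff₀ hc0] at hx
    linarith
  · rw [map_smul, smul_eq_mul, div_mul_cancel₀ _ (abs_pos.1 hfx)]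

lemma sum_dualNorm_sq_le {α : Type*} [Fintype α] {Ψ : α → E →ₗ[ℝ] ℝ} {C : ℝ} (hC : 0 ≤ C)
    (hΨ : ∀ F : α → E, ∑ s, Ψ s (F s) ≤ C * √(∑ s, Q.q (F s) ^ 2)) :
    ∑ s, dualNorm Q.q (Ψ s) ^ 2 ≤ C ^ 2 := by
  have happrox : ∀ ε > 0, ∑ s, dualNorm Q.q (Ψ s) ^ 2 ≤ (C * (1 + ε)) ^ 2 := by
    intro ε hε
    choose y hy hΨy using fun s => exists_dualNorm_le_apply Q (Ψ s) (lt_add_of_pos_right 1 hε)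
    set S := ∑ s, dualNorm Q.q (Ψ s) ^ 2 with hS
    have hS0 : 0 ≤ S := Finset.sum_nonneg fun _ _ => sq_nonneg _
    have hself : S ≤ C * (1 + ε) * √S :=
      calc S ≤ ∑ s, Ψ s (dualNorm Q.q (Ψ s) • y s) := by
            simp only [hS, map_smul, smul_eq_mul, sq]
            gcongr with s
            exacts [dualNorm_nonneg _ _, hΨy s]
        _ ≤ C * √(∑ s, Q.q (dualNorm Q.q (Ψ s) • y s) ^ 2) := hΨ _
        _ ≤ C * √(S * (1 + ε) ^ 2) := by
            simp only [hS, Q.smul_eq, mul_pow, sq_abs, Finset.sum_mul]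
            gcongr with s
            exacts [Q.nonneg _, hy s]
        _ = C * (1 + ε) * √S := by
            rw [Real.sqrt_mul hS0, Real.sqrt_sq (by positivity), mul_assoc, mul_comm √S]
    nlinarith [Real.sq_sqrt hS0, sq_nonneg (C * (1 + ε) - √S)]
  have hcont : Continuous fun ε : ℝ => (C * (1 + ε)) ^ 2 := by fun_prop
  simpa only [add_zero, mul_one] using le_apply_zero_of_forall_pos hcont happrox

end DualNorm

section RademacherCoefficients

variable {E : Type uE} [AddCommGroup E] [Module ℝ E] {n : ℕ}

/-- The Rademacher coefficients `𝔼 ε_j F(ε)` of a function on the cube `{-1, 1}^n`. -/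
noncomputable def rademacherCoeff : ((Fin n → Bool) → E) →ₗ[ℝ] (Fin n → E) :=
  LinearMap.pi fun j => ((2 : ℝ) ^ n)⁻¹ • ∑ s : Fin n → Bool, rsign (s j) • LinearMap.proj s

lemma rademacherCoeff_apply (F : (Fin n → Bool) → E) (j : Fin n) :
    rademacherCoeff F j = ((2 : ℝ) ^ n)⁻¹ • ∑ s, rsign (s j) • F s := by
  simp [rademacherCoeff]

lemma rademacherCoeff_sum_rsign_smul (x : Fin n → E) :
    rademacherCoeff (fun s => ∑ j, rsign (s j) • x j) = x := by
  have horth (i j : Fin n) :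
      ∑ s : Fin n → Bool, rsign (s i) * rsign (s j) = if i = j then 2 ^ n else 0 := by
    simpa [walsh] using sum_walsh_mul_walsh {i} {j}
  ext i
  simp only [rademacherCoeff_apply, Finset.smul_sum, smul_smul]
  rw [Finset.sum_comm]
  simp only [← Finset.sum_smul, ← Finset.mul_sum, horth]
  simp

lemma rademacherCoeff_surjective :
    Function.Surjective (rademacherCoeff : ((Fin n → Bool) → E) →ₗ[ℝ] (Fin n → E)) :=
  fun x => ⟨_, rademacherCoeff_sum_rsign_smul x⟩

end RademacherCoefficients

section Lift

variable {E : Type uE} [AddCommGroup E] [Module ℝ E] {n : ℕ}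

lemma apply_eq_sum_comp_single (g : (Fin n → E) →ₗ[ℝ] ℝ) (y : Fin n → E) :
    g y = ∑ j, (g ∘ₗ LinearMap.single ℝ (fun _ => E) j) (y j) := by
  conv_lhs => rw [← Finset.univ_sum_single y, map_sum]
  rfl

variable (Q : QuasiNormOn E)

/-- The quotient seminorm on `Eⁿ` of the Euclidean norm on functions on the cube by the functions
whose Rademacher coefficients vanish. -/
noncomputable def rademacherSeminorm (n : ℕ) : Seminorm ℝ (Fin n → E) :=
  quotientSeminorm rademacherCoeff (l2Seminorm (Fin n → Bool) Q.envelope)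
    rademacherCoeff_surjective

lemma rademacherSeminorm_rademacherCoeff_le (F : (Fin n → Bool) → E) :
    rademacherSeminorm Q n (rademacherCoeff F) ≤ √(∑ s, Q.q (F s) ^ 2) := by
  refine (quotientSeminorm_map_le _ _ _ F).trans (Real.le_sqrt_of_sq_le ?_)
  rw [l2Seminorm_sq]
  gcongr with s
  exact Q.envelope_le (F s)

lemma dualBdd_comp_single {g : (Fin n → E) →ₗ[ℝ] ℝ} (hg : ∀ y, |g y| ≤ rademacherSeminorm Q n y)
    (j : Fin n) : DualBdd Q.q (g ∘ₗ LinearMap.single ℝ (fun _ => E) j) := by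
  refine ⟨√(2 ^ n), Real.sqrt_nonneg _, fun z => ?_⟩
  let F : (Fin n → Bool) → E := fun s => ∑ i, rsign (s i) • (Pi.single j z : Fin n → E) i
  have hF : ∀ s, Q.q (F s) = Q.q z := fun s => by
    simp [F, Pi.single_apply, Q.smul_eq, abs_rsign]
  have hcoeff : rademacherCoeff F = Pi.single j z := rademacherCoeff_sum_rsign_smul _
  calc |g (Pi.single j z)| ≤ rademacherSeminorm Q n (rademacherCoeff F) := hcoeff ▸ hg _
    _ ≤ √(∑ s, Q.q (F s) ^ 2) := rademacherSeminorm_rademacherCoeff_le Q F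
    _ = √(2 ^ n) * Q.q z := by
      simp [hF, Real.sqrt_sq (Q.nonneg z)]

/-- Here `g` is the function `s ↦ 2⁻ⁿ ∑ᵢ sᵢ gᵢ` on the cube, and hence a Rademacher sum in the dual
space. -/
lemma signSqSum_dualNorm_comp_single_le {g : (Fin n → E) →ₗ[ℝ] ℝ}
    (hg : ∀ y, |g y| ≤ rademacherSeminorm Q n y) :
    signSqSum (dualNorm Q.q) (fun j => g ∘ₗ LinearMap.single ℝ (fun _ => E) j) ≤ (2 ^ n) ^ 2 := by
  refine sum_dualNorm_sq_le Q (by positivity) fun F => ?_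
  have hpair : g (rademacherCoeff F) = ((2 : ℝ) ^ n)⁻¹ *
      ∑ s, (∑ j, rsign (s j) • g ∘ₗ LinearMap.single ℝ (fun _ => E) j) (F s) := by
    rw [apply_eq_sum_comp_single]
    simp only [rademacherCoeff_apply, map_smul, map_sum, LinearMap.sum_apply,
      LinearMap.smul_apply, smul_eq_mul]
    rw [← Finset.mul_sum, Finset.sum_comm]
  rw [← inv_mul_le_iff₀ (by positivity), ← hpair]
  exact (le_abs_self _).trans ((hg _).trans (rademacherSeminorm_rademacherCoeff_le Q F))

lemma rademacherSeminorm_sq_le {C : ℝ}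
    (hdual : ∀ (f : Fin n → (E →ₗ[ℝ] ℝ)), (∀ i, DualBdd Q.q (f i)) →
      2 ^ n * ∑ i, dualNorm Q.q (f i) ^ 2 ≤ C ^ 2 * signSqSum (dualNorm Q.q) f)
    (x : Fin n → E) :
    rademacherSeminorm Q n x ^ 2 ≤ C ^ 2 * 2 ^ n * ∑ j, Q.q (x j) ^ 2 := by
  obtain ⟨g, hgx, hg⟩ := exists_linearMap_apply_eq_seminorm (rademacherSeminorm Q n) x
  let φ (j : Fin n) : E →ₗ[ℝ] ℝ := g ∘ₗ LinearMap.single ℝ (fun _ => E) j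
  have hφ : ∀ j, DualBdd Q.q (φ j) := dualBdd_comp_single Q hg
  have hφ2 : ∑ j, dualNorm Q.q (φ j) ^ 2 ≤ C ^ 2 * 2 ^ n := by
    have hle := (hdual φ hφ).trans
      (mul_le_mul_of_nonneg_left (signSqSum_dualNorm_comp_single_le Q hg) (sq_nonneg C))
    rw [sq ((2 : ℝ) ^ n), ← mul_assoc, mul_comm] at hle
    exact le_of_mul_le_mul_right hle (by positivity)
  have hgle : |g x| ≤ ∑ j, dualNorm Q.q (φ j) * Q.q (x j) := by
    rw [apply_eq_sum_comp_single]
    exact (Finset.abs_sum_le_sum_abs _ _).trans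
      (Finset.sum_le_sum fun j _ => abs_apply_le_dualNorm_mul Q (hφ j) (x j))
  calc rademacherSeminorm Q n x ^ 2 ≤ (∑ j, dualNorm Q.q (φ j) * Q.q (x j)) ^ 2 := by
        rw [← hgx, ← sq_abs]
        gcongr
    _ ≤ (∑ j, dualNorm Q.q (φ j) ^ 2) * ∑ j, Q.q (x j) ^ 2 :=
        Finset.sum_mul_sq_le_sq_mul_sq _ _ _
    _ ≤ C ^ 2 * 2 ^ n * ∑ j, Q.q (x j) ^ 2 :=
        mul_le_mul_of_nonneg_right hφ2 (Finset.sum_nonneg fun _ _ => sq_nonneg _)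

end Lift

section TypeTwo

variable {E : Type uE} {Z : Type uZ} [AddCommGroup E] [Module ℝ E] [AddCommGroup Z] [Module ℝ Z]

/-- The operator `u` has type 2, with squared constant at most `K`. -/
def OpTypeTwoSqLe (qE : E → ℝ) (qZ : Z → ℝ) (u : E →ₗ[ℝ] Z) (K : ℝ) : Prop :=
  ∀ (n : ℕ) (x : Fin n → E),
    signSqSum qZ (u ∘ x) ≤ K * (2 ^ n * ∑ j, qE (x j) ^ 2)

lemma OpTypeTwoSqLe.signSqSum_le {qE : E → ℝ} {qZ : Z → ℝ} {u : E →ₗ[ℝ] Z} {K : ℝ}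
    (h : OpTypeTwoSqLe qE qZ u K) {ι : Type*} [Fintype ι] [DecidableEq ι] (x : ι → E) :
    signSqSum qZ (u ∘ x) ≤ K * (2 ^ Fintype.card ι * ∑ j, qE (x j) ^ 2) := by
  let e := (Fintype.equivFin ι).symm
  rw [← signSqSum_comp_equiv qZ e, ← e.sum_comp fun j => qE (x j) ^ 2]
  exact h _ (x ∘ e)

lemma HilbertFactorBound.opTypeTwoSqLe {QE : QuasiNormOn E} {QZ : QuasiNormOn Z}
    {u : E →ₗ[ℝ] Z} {G L d C : ℝ} (h : HilbertFactorBound QE QZ u G) (hL : 0 ≤ L)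
    (hu : ∀ x, QZ.q (u x) ^ 2 ≤ L * QE.envelope x ^ 2) (hd : 0 < d) (hd1 : d ≤ 1)
    (hdual : ∀ (n : ℕ) (f : Fin n → (E →ₗ[ℝ] ℝ)), (∀ i, DualBdd QE.q (f i)) →
      2 ^ n * ∑ i, dualNorm QE.q (f i) ^ 2 ≤ C ^ 2 * signSqSum (dualNorm QE.q) f) :
    OpTypeTwoSqLe QE.q QZ.q u (2 * QZ.k ^ 2 * (L * (d ^ 2)⁻¹ + d ^ 4 * G) * C ^ 2) := by
  intro n x
  set P := 2 * QZ.k ^ 2 * (L * (d ^ 2)⁻¹ + d ^ 4 * G)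
  have hG := h.nonneg
  have : 0 ≤ P := by positivity
  have hlift : ∀ ε > 0, signSqSum QZ.q (u ∘ x) ≤ P * (rademacherSeminorm QE n x + ε) ^ 2 := by
    intro ε hε
    obtain ⟨F, rfl, hF⟩ := exists_of_quotientSeminorm_lt _ _ rademacherCoeff_surjective
      (lt_add_of_pos_right (rademacherSeminorm QE n x) hε)
    have hproj : ∀ t, ∑ j, rsign (t j) • u (rademacherCoeff F j) =
        u (∑ s, rademacherProjection (Fin n) t s • F s) := fun t => by
      simp only [sum_rademacherProjection_smul, Fintype.card_fin, rademacherCoeff_apply, map_sum,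
        map_smul]
    calc signSqSum QZ.q (u ∘ rademacherCoeff F)
        = ∑ t, QZ.q (u (∑ s, rademacherProjection (Fin n) t s • F s)) ^ 2 :=
          Finset.sum_congr rfl fun t _ => by rw [← hproj]; rfl
      _ ≤ P * ∑ s, QE.envelope (F s) ^ 2 := h.sum_rademacherProjection_sq_le hL hu hd hd1 F
      _ ≤ P * (rademacherSeminorm QE n (rademacherCoeff F) + ε) ^ 2 := by
          rw [← l2Seminorm_sq]
          gcongr
  have hcont : Continuous fun ε => P * (rademacherSeminorm QE n x + ε) ^ 2 := by fun_prop
  calc signSqSum QZ.q (u ∘ x) ≤ P * rademacherSeminorm QE n x ^ 2 := by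
        simpa only [add_zero] using le_apply_zero_of_forall_pos hcont hlift
    _ ≤ P * (C ^ 2 * 2 ^ n * ∑ j, QE.q (x j) ^ 2) := by
        gcongr
        exact rademacherSeminorm_sq_le QE (hdual n) x
    _ = P * C ^ 2 * (2 ^ n * ∑ j, QE.q (x j) ^ 2) := by ring

end TypeTwo

section LipschitzRegularization

variable {V : Type*} [NormedAddCommGroup V]

/-- The Pasch–Hausdorff envelope of `f`: for `f ≥ 0` it is the largest `L`-Lipschitz function
below `f`. -/
noncomputable def lipschitzEnvelope (f : V → ℝ) (L : ℝ) (v : V) : ℝ :=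
  ⨅ w, (f w + L * ‖v - w‖)

variable {f : V → ℝ} {L : ℝ}

lemma lipschitzEnvelope_le_add (hL : 0 ≤ L) (hf : ∀ v, 0 ≤ f v) (v w : V) :
    lipschitzEnvelope f L v ≤ f w + L * ‖v - w‖ :=
  ciInf_le ⟨0, by rintro _ ⟨h, rfl⟩; have := hf h; positivity⟩ w

lemma lipschitzEnvelope_nonneg (hL : 0 ≤ L) (hf : ∀ v, 0 ≤ f v) (v : V) :
    0 ≤ lipschitzEnvelope f L v :=
  le_ciInf fun w => add_nonneg (hf w) (by positivity)

lemma lipschitzEnvelope_le (hL : 0 ≤ L) (hf : ∀ v, 0 ≤ f v) (v : V) :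
    lipschitzEnvelope f L v ≤ f v := by
  simpa using lipschitzEnvelope_le_add hL hf v v

lemma continuous_lipschitzEnvelope (hL : 0 ≤ L) (hf : ∀ v, 0 ≤ f v) :
    Continuous (lipschitzEnvelope f L) := by
  refine (LipschitzWith.of_le_add_mul ⟨L, hL⟩ fun v v' => ?_).continuous
  rw [← sub_le_iff_le_add]
  refine le_ciInf fun w => sub_le_iff_le_add.2 ?_
  calc lipschitzEnvelope f L v ≤ f w + L * ‖v - w‖ := lipschitzEnvelope_le_add hL hf v w
    _ ≤ f w + L * (‖v - v'‖ + ‖v' - w‖) := by gcongr; exact norm_sub_le_norm_sub_add_norm_sub ..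
    _ = f w + L * ‖v' - w‖ + L * dist v v' := by rw [dist_eq_norm]; ring

lemma le_mul_lipschitzEnvelope {k : ℝ} (hk : 0 < k) (hfL : ∀ v, f v ≤ L * ‖v‖)
    (hadd : ∀ v w, f (v + w) ≤ k * (f v + f w)) (v : V) :
    f v ≤ k * lipschitzEnvelope f L v := by
  rw [← div_le_iff₀' hk]
  refine le_ciInf fun w => (div_le_iff₀' hk).2 ?_
  calc f v = f (w + (v - w)) := by rw [add_sub_cancel]
    _ ≤ k * (f w + f (v - w)) := hadd _ _
    _ ≤ k * (f w + L * ‖v - w‖) := by gcongr; exact hfL _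

end LipschitzRegularization

section Gauss

open MeasureTheory ProbabilityTheory

variable {ι κ : Type*} [Fintype ι] [Fintype κ]

lemma memLp_two_coord_stdGaussian (i : ι) :
    MemLp (fun g : EuclideanSpace ℝ ι => g i) 2 (stdGaussian (EuclideanSpace ℝ ι)) :=
  IsGaussian.memLp_dual _ (EuclideanSpace.proj i) 2 (by simp)

lemma integral_coord_sq_stdGaussian (i : ι) :
    ∫ g, g i ^ 2 ∂(stdGaussian (EuclideanSpace ℝ ι)) = 1 := by
  classical
  have hnorm : ‖(EuclideanSpace.proj i : StrongDual ℝ (EuclideanSpace ℝ ι))‖ = 1 := by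
    have hinner : (EuclideanSpace.proj i : StrongDual ℝ (EuclideanSpace ℝ ι)) =
        innerSL ℝ (EuclideanSpace.single i 1) := by
      ext x
      simp [EuclideanSpace.inner_single_left]
    rw [hinner, innerSL_apply_norm]
    simp
  have hvar := variance_dual_stdGaussian (E := EuclideanSpace ℝ ι) (EuclideanSpace.proj i)
  rw [variance_of_integral_eq_zero (by fun_prop) (integral_strongDual_stdGaussian _), hnorm]
    at hvar
  simpa using hvar

lemma integrable_sum_sq_mul_stdGaussian (α : ι → ℝ) :
    Integrable (fun g : EuclideanSpace ℝ ι => ∑ i, g i ^ 2 * α i)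
      (stdGaussian (EuclideanSpace ℝ ι)) :=
  integrable_finsetSum _ fun i _ => (memLp_two_coord_stdGaussian i).integrable_sq.mul_const _

lemma integral_sum_sq_mul_stdGaussian (α : ι → ℝ) :
    ∫ g, ∑ i, g i ^ 2 * α i ∂(stdGaussian (EuclideanSpace ℝ ι)) = ∑ i, α i := by
  rw [integral_finsetSum _ fun i _ =>
    (memLp_two_coord_stdGaussian i).integrable_sq.mul_const _]
  simp only [integral_mul_const, integral_coord_sq_stdGaussian, one_mul]

/-- `a` is an isometric embedding of Euclidean spaces. -/
def IsIsometryMatrix (a : Matrix ι κ ℝ) : Prop :=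
  ∀ v : κ → ℝ, ∑ i, (∑ j, a i j * v j) ^ 2 = ∑ j, v j ^ 2

lemma IsIsometryMatrix.rsign_mul {a : Matrix ι κ ℝ} (ha : IsIsometryMatrix a) (t : ι → Bool) :
    IsIsometryMatrix (Matrix.of fun i j => rsign (t i) * a i j) := by
  intro v
  simp only [Matrix.of_apply, mul_assoc, ← Finset.mul_sum, mul_pow, rsign_sq, one_mul]
  exact ha v

lemma isIsometryMatrix_one [DecidableEq κ] : IsIsometryMatrix (1 : Matrix κ κ ℝ) := by
  intro v
  simp only [Matrix.one_apply, ite_mul, one_mul, zero_mul, Finset.sum_ite_eq, Finset.mem_univ,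
    if_true]

lemma IsIsometryMatrix.map_stdGaussian {a : Matrix ι κ ℝ} (ha : IsIsometryMatrix a) :
    (stdGaussian (EuclideanSpace ℝ ι)).map
      (fun g => ∑ i, g i • (WithLp.toLp 2 (a i) : EuclideanSpace ℝ κ)) =
    stdGaussian (EuclideanSpace ℝ κ) := by
  set U : EuclideanSpace ℝ ι → EuclideanSpace ℝ κ := fun g => ∑ i, g i • WithLp.toLp 2 (a i)
  have hU : Continuous U := by fun_prop
  let W : EuclideanSpace ℝ κ → EuclideanSpace ℝ ι :=
    fun v => WithLp.toLp 2 fun i => ∑ j, a i j * v j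
  have hadj : ∀ g v, inner ℝ (U g) v = inner ℝ g (W v) := by
    intro g v
    simp only [U, W, sum_inner, real_inner_smul_left]
    simp only [PiLp.inner_apply, RCLike.inner_apply, conj_trivial, mul_comm]
  have hnorm : ∀ v, ‖W v‖ = ‖v‖ := by
    intro v
    simp only [W, EuclideanSpace.norm_eq, Real.norm_eq_abs, sq_abs]
    rw [ha]
  have := Measure.isProbabilityMeasure_map (μ := stdGaussian (EuclideanSpace ℝ ι)) hU.aemeasurable
  refine Measure.ext_of_charFun (funext fun v => ?_)
  rw [charFun_stdGaussian, charFun_apply, integral_map hU.aemeasurable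
    (Continuous.aestronglyMeasurable (by fun_prop))]
  simp_rw [hadj]
  rw [← charFun_apply, charFun_stdGaussian, hnorm]

lemma IsIsometryMatrix.map_signed_stdGaussian {a : Matrix ι κ ℝ} (ha : IsIsometryMatrix a)
    (t : ι → Bool) :
    (stdGaussian (EuclideanSpace ℝ ι)).map
      (fun g => ∑ i, rsign (t i) • g i • (WithLp.toLp 2 (a i) : EuclideanSpace ℝ κ)) =
    stdGaussian (EuclideanSpace ℝ κ) := by
  rw [← (ha.rsign_mul t).map_stdGaussian]
  congr 1 with g j
  simp only [WithLp.ofLp_sum, WithLp.ofLp_smul, Finset.sum_apply, Pi.smul_apply, smul_eq_mul,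
    Matrix.of_apply]
  exact Finset.sum_congr rfl fun i _ => by ring

section Signs

variable {a : Matrix ι κ ℝ} {p : EuclideanSpace ℝ κ → ℝ}

lemma IsIsometryMatrix.integrable_signed_sq (ha : IsIsometryMatrix a) (hp : Continuous p)
    (hint : Integrable (fun v => p v ^ 2) (stdGaussian (EuclideanSpace ℝ κ))) (t : ι → Bool) :
    Integrable (fun g : EuclideanSpace ℝ ι =>
      p (∑ i, rsign (t i) • g i • WithLp.toLp 2 (a i)) ^ 2) (stdGaussian (EuclideanSpace ℝ ι)) := by
  rw [← ha.map_signed_stdGaussian t] at hint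
  exact (integrable_map_measure (by fun_prop) (Continuous.aemeasurable (by fun_prop))).1 hint

lemma IsIsometryMatrix.integral_signed_sq (ha : IsIsometryMatrix a) (hp : Continuous p)
    (t : ι → Bool) :
    ∫ g, p (∑ i, rsign (t i) • g i • WithLp.toLp 2 (a i)) ^ 2
      ∂(stdGaussian (EuclideanSpace ℝ ι)) =
    ∫ v, p v ^ 2 ∂(stdGaussian (EuclideanSpace ℝ κ)) := by
  rw [← ha.map_signed_stdGaussian t, integral_map (Continuous.aemeasurable (by fun_prop))
    (Continuous.aestronglyMeasurable (by fun_prop))]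

variable [DecidableEq ι]

lemma IsIsometryMatrix.integrable_signSqSum (ha : IsIsometryMatrix a) (hp : Continuous p)
    (hint : Integrable (fun v => p v ^ 2) (stdGaussian (EuclideanSpace ℝ κ))) :
    Integrable (fun g : EuclideanSpace ℝ ι => signSqSum p fun i => g i • WithLp.toLp 2 (a i))
      (stdGaussian (EuclideanSpace ℝ ι)) :=
  integrable_finsetSum _ fun t _ => ha.integrable_signed_sq hp hint t

lemma IsIsometryMatrix.integral_signSqSum (ha : IsIsometryMatrix a) (hp : Continuous p)
    (hint : Integrable (fun v => p v ^ 2) (stdGaussian (EuclideanSpace ℝ κ))) :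
    ∫ g, signSqSum p (fun i => g i • WithLp.toLp 2 (a i)) ∂(stdGaussian (EuclideanSpace ℝ ι)) =
    2 ^ Fintype.card ι * ∫ v, p v ^ 2 ∂(stdGaussian (EuclideanSpace ℝ κ)) := by
  simp only [signSqSum]
  rw [integral_finsetSum _ fun t _ => ha.integrable_signed_sq hp hint t]
  simp only [ha.integral_signed_sq hp, Finset.sum_const, Finset.card_univ, Fintype.card_fun,
    Fintype.card_bool, nsmul_eq_mul, Nat.cast_pow, Nat.cast_ofNat]

lemma IsIsometryMatrix.sum_le_integral (ha : IsIsometryMatrix a) (hp : Continuous p)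
    (hint : Integrable (fun v => p v ^ 2) (stdGaussian (EuclideanSpace ℝ κ))) {D : ℝ} {α : ι → ℝ}
    (h : ∀ g : ι → ℝ, 2 ^ Fintype.card ι * ∑ i, g i ^ 2 * α i ≤
      D * signSqSum p fun i => g i • WithLp.toLp 2 (a i)) :
    ∑ i, α i ≤ D * ∫ v, p v ^ 2 ∂(stdGaussian (EuclideanSpace ℝ κ)) := by
  have hmono := integral_mono ((integrable_sum_sq_mul_stdGaussian α).const_mul _)
    ((ha.integrable_signSqSum hp hint).const_mul D) fun g => h g
  rw [integral_const_mul, integral_const_mul, integral_sum_sq_mul_stdGaussian,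
    ha.integral_signSqSum hp hint, mul_left_comm] at hmono
  exact le_of_mul_le_mul_left hmono (by positivity)

lemma IsIsometryMatrix.integral_le_sum (ha : IsIsometryMatrix a) (hp : Continuous p)
    (hint : Integrable (fun v => p v ^ 2) (stdGaussian (EuclideanSpace ℝ κ))) {β : ι → ℝ}
    (h : ∀ g : ι → ℝ, signSqSum p (fun i => g i • WithLp.toLp 2 (a i)) ≤
      2 ^ Fintype.card ι * ∑ i, g i ^ 2 * β i) :
    ∫ v, p v ^ 2 ∂(stdGaussian (EuclideanSpace ℝ κ)) ≤ ∑ i, β i := by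
  have hmono := integral_mono (ha.integrable_signSqSum hp hint)
    ((integrable_sum_sq_mul_stdGaussian β).const_mul _) fun g => h g
  rw [integral_const_mul, integral_sum_sq_mul_stdGaussian, ha.integral_signSqSum hp hint]
    at hmono
  exact le_of_mul_le_mul_left hmono (by positivity)

end Signs

lemma integrable_sq_of_le_mul_norm {p : EuclideanSpace ℝ κ → ℝ} (hp : Continuous p)
    (hp0 : ∀ v, 0 ≤ p v) {L : ℝ} (hpL : ∀ v, p v ≤ L * ‖v‖) :
    Integrable (fun v => p v ^ 2) (stdGaussian (EuclideanSpace ℝ κ)) := by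
  have hnorm : Integrable (fun v : EuclideanSpace ℝ κ => L ^ 2 * ‖v‖ ^ 2)
      (stdGaussian (EuclideanSpace ℝ κ)) :=
    IsGaussian.memLp_two_id.norm.integrable_sq.const_mul _
  refine hnorm.mono' (by fun_prop) (Filter.Eventually.of_forall fun v => ?_)
  rw [Real.norm_of_nonneg (sq_nonneg _), ← mul_pow]
  exact pow_le_pow_left₀ (hp0 v) (hpL v) 2

lemma signSqSum_le_mul {V : Type*} [AddCommGroup V] [Module ℝ V] [DecidableEq ι] {f p : V → ℝ}
    {k : ℝ} (hf : ∀ v, 0 ≤ f v) (hfp : ∀ v, f v ≤ k * p v) (x : ι → V) :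
    signSqSum f x ≤ k ^ 2 * signSqSum p x := by
  simp only [signSqSum, Finset.mul_sum, ← mul_pow]
  exact Finset.sum_le_sum fun t _ => pow_le_pow_left₀ (hf _) (hfp _) 2

/-- Both hypotheses compare averages of `f²` along the signed vectors `± gᵢ aᵢ` and `± gⱼ eⱼ`;
for Gaussian `g` these two families have the same distribution. -/
lemma IsIsometryMatrix.sum_le_of_signSqSum [DecidableEq ι] [DecidableEq κ] {a : Matrix ι κ ℝ}
    (ha : IsIsometryMatrix a) {f : EuclideanSpace ℝ κ → ℝ} {k L D : ℝ} (hk : 0 < k) (hL : 0 ≤ L)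
    (hD : 0 ≤ D) (hf : ∀ v, 0 ≤ f v) (hfL : ∀ v, f v ≤ L * ‖v‖)
    (hadd : ∀ v w, f (v + w) ≤ k * (f v + f w)) {α : ι → ℝ} {β : κ → ℝ}
    (hlower : ∀ g : ι → ℝ, 2 ^ Fintype.card ι * ∑ i, g i ^ 2 * α i ≤
      D * signSqSum f fun i => g i • WithLp.toLp 2 (a i))
    (hupper : ∀ g : κ → ℝ, signSqSum f (fun j => g j • WithLp.toLp 2 ((1 : Matrix κ κ ℝ) j)) ≤
      2 ^ Fintype.card κ * ∑ j, g j ^ 2 * β j) :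
    ∑ i, α i ≤ D * k ^ 2 * ∑ j, β j := by
  set p := lipschitzEnvelope f L
  have hp : Continuous p := continuous_lipschitzEnvelope hL hf
  have hp0 : ∀ v, 0 ≤ p v := lipschitzEnvelope_nonneg hL hf
  have hpf : ∀ v, p v ≤ f v := lipschitzEnvelope_le hL hf
  have hint := integrable_sq_of_le_mul_norm hp hp0 fun v => (hpf v).trans (hfL v)
  calc ∑ i, α i ≤ D * k ^ 2 * ∫ v, p v ^ 2 ∂(stdGaussian (EuclideanSpace ℝ κ)) := by
        refine ha.sum_le_integral hp hint fun g => (hlower g).trans ?_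
        rw [mul_assoc]
        gcongr
        exact signSqSum_le_mul hf (le_mul_lipschitzEnvelope hk hfL hadd) _
    _ ≤ D * k ^ 2 * ∑ j, β j := by
        gcongr
        refine isIsometryMatrix_one.integral_le_sum hp hint fun g => le_trans ?_ (hupper g)
        simpa only [one_pow, one_mul] using
          signSqSum_le_mul (k := 1) hp0 (fun v => by simpa only [one_mul] using hpf v) _

lemma dotProduct_transpose_mul_self_mulVec (b : Matrix ι κ ℝ) (v : κ → ℝ) :
    v ⬝ᵥ (b.transpose * b).mulVec v = ∑ i, (∑ j, b i j * v j) ^ 2 := by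
  rw [← Matrix.mulVec_mulVec, Matrix.dotProduct_mulVec, Matrix.vecMul_transpose]
  simp only [dotProduct, Matrix.mulVec, sq]

open scoped MatrixOrder in
/-- The lower block is a square root of `1 - aᵀa`. -/
lemma SqOpNormLe.exists_isIsometryMatrix {a : Matrix ι κ ℝ} (ha : SqOpNormLe a 1) :
    ∃ c : Matrix κ κ ℝ, IsIsometryMatrix (Matrix.of (Sum.elim a c)) := by
  classical
  have hquad : ∀ v, v ⬝ᵥ (1 - a.transpose * a).mulVec v =
      ∑ j, v j ^ 2 - ∑ i, (∑ j, a i j * v j) ^ 2 := by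
    intro v
    rw [Matrix.sub_mulVec, dotProduct_sub, dotProduct_transpose_mul_self_mulVec,
      Matrix.one_mulVec]
    simp only [dotProduct, sq]
  have hpos : (1 - a.transpose * a).PosSemidef := by
    refine Matrix.PosSemidef.of_dotProduct_mulVec_nonneg ?_ fun v => ?_
    · simp [Matrix.IsHermitian, Matrix.conjTranspose_eq_transpose_of_trivial]
    · rw [star_trivial, hquad, sub_nonneg]
      simpa only [one_mul] using ha v
  obtain ⟨c, hc⟩ := CStarAlgebra.nonneg_iff_eq_star_mul_self.mp hpos.nonneg
  rw [Matrix.star_eq_conjTranspose, Matrix.conjTranspose_eq_transpose_of_trivial] at hc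
  refine ⟨c, fun v => ?_⟩
  have hcv := dotProduct_transpose_mul_self_mulVec c v
  rw [← hc, hquad] at hcv
  rw [Fintype.sum_sum_type]
  change ∑ i, (∑ j, a i j * v j) ^ 2 + ∑ i, (∑ j, c i j * v j) ^ 2 = _
  rw [← hcv, add_sub_cancel]

end Gauss

section GaussFactor

variable {E : Type uE} {Z : Type uZ} [AddCommGroup E] [Module ℝ E] [AddCommGroup Z] [Module ℝ Z]

lemma signSqSum_comp_linearMap {V W ι : Type*} [AddCommGroup V] [Module ℝ V] [AddCommGroup W]
    [Module ℝ W] [Fintype ι] [DecidableEq ι] (N : W → ℝ) (S : V →ₗ[ℝ] W) (x : ι → V) :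
    signSqSum (fun v => N (S v)) x = signSqSum N (S ∘ x) := by
  simp only [signSqSum, map_sum, map_smul, Function.comp_apply]

/-- Kwapień's theorem. -/
lemma OpTypeTwoSqLe.hilbertFactorBound {QE : QuasiNormOn E} {QZ : QuasiNormOn Z} {u : E →ₗ[ℝ] Z}
    {C T : ℝ} (hT : 0 ≤ T) (hu : OpTypeTwoSqLe QE.q QZ.q u T) (hC : CotypeConstLe QZ.q 2 C) :
    HilbertFactorBound QE QZ u (C ^ 2 * QZ.k ^ 2 * T) where
  nonneg := by positivity
  sum_sq_le ι κ _ _ a ha x := by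
    classical
    obtain ⟨c, hV⟩ := ha.exists_isIsometryMatrix
    set V := Matrix.of (Sum.elim a c)
    let S : EuclideanSpace ℝ κ →ₗ[ℝ] Z :=
      Fintype.linearCombination ℝ (u ∘ x) ∘ₗ (WithLp.linearEquiv 2 ℝ (κ → ℝ)).toLinearMap
    have hS : ∀ v : κ → ℝ, S (WithLp.toLp 2 v) = u (∑ j, v j • x j) := fun v => by
      simp [S, Fintype.linearCombination_apply]
    have hS1 : ∀ j, S (WithLp.toLp 2 ((1 : Matrix κ κ ℝ) j)) = u (x j) := fun j => by
      rw [hS]; simp [Matrix.one_apply]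
    obtain ⟨L, hL, hSL⟩ := QZ.exists_q_sum_smul_le_norm (u ∘ x)
    have hsum := hV.sum_le_of_signSqSum (f := fun v => QZ.q (S v)) QZ.k_pos hL (sq_nonneg C)
      (fun v => QZ.nonneg _) hSL (fun v w => by rw [map_add]; exact QZ.tri _ _)
      (α := fun i => QZ.q (u (∑ j, V i j • x j)) ^ 2) (β := fun j => T * QE.q (x j) ^ 2)
      (fun g => by
        rw [signSqSum_comp_linearMap]
        refine le_trans (le_of_eq ?_)
          (hC.two_pow_mul_sum_sq_le (S ∘ fun i => g i • WithLp.toLp 2 (V i)))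
        simp only [Function.comp_apply, map_smul S, hS, QZ.smul_eq, mul_pow, sq_abs])
      (fun g => by
        rw [signSqSum_comp_linearMap]
        refine le_trans (le_of_eq ?_)
          ((hu.signSqSum_le fun j => g j • x j).trans (le_of_eq ?_))
        · congr 1; ext j; simp only [Function.comp_apply, map_smul, hS1]
        · simp only [QE.smul_eq, mul_pow, sq_abs, Finset.mul_sum]
          exact Finset.sum_congr rfl fun j _ => by ring)
    calc ∑ i, QZ.q (u (∑ j, a i j • x j)) ^ 2
        ≤ ∑ i, QZ.q (u (∑ j, V i j • x j)) ^ 2 := by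
          rw [Fintype.sum_sum_type]
          exact le_add_of_nonneg_right (Finset.sum_nonneg fun j _ => sq_nonneg _)
      _ ≤ C ^ 2 * QZ.k ^ 2 * ∑ j, T * QE.q (x j) ^ 2 := hsum
      _ = C ^ 2 * QZ.k ^ 2 * T * ∑ j, QE.q (x j) ^ 2 := by rw [← Finset.mul_sum, ← mul_assoc]

end GaussFactor

section Bootstrap

variable {E : Type uE} {Z : Type uZ} [AddCommGroup E] [Module ℝ E] [AddCommGroup Z] [Module ℝ Z]
  {QE : QuasiNormOn E} {QZ : QuasiNormOn Z}

lemma HilbertFactorBound.improve {u : E →ₗ[ℝ] Z} {G M C C' d : ℝ} {m : ℕ}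
    (h : HilbertFactorBound QE QZ u G) (hM : 0 ≤ M) (hu : OpBoundedBy QE.q QZ.q u M) (hm : m ≠ 0)
    (hd : 0 < d) (hd1 : d ≤ 1) (hcot : CotypeConstLe QZ.q 2 C)
    (hdual : ∀ (n : ℕ) (f : Fin n → (E →ₗ[ℝ] ℝ)), (∀ i, DualBdd QE.q (f i)) →
      2 ^ n * ∑ i, dualNorm QE.q (f i) ^ 2 ≤ C' ^ 2 * signSqSum (dualNorm QE.q) f) :
    HilbertFactorBound QE QZ u (C ^ 2 * QZ.k ^ 2 * (2 * QZ.k ^ 2 *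
      (2 * QZ.k ^ 2 * (G / m + (M * QE.k ^ m) ^ 2) * (d ^ 2)⁻¹ + d ^ 4 * G) * C' ^ 2)) := by
  have hG := h.nonneg
  have hL : 0 ≤ 2 * QZ.k ^ 2 * (G / m + (M * QE.k ^ m) ^ 2) := by positivity
  exact (h.opTypeTwoSqLe hL (h.apply_sq_le_of_opBoundedBy hM hu hm) hd hd1
    hdual).hilbertFactorBound (by positivity) hcot

lemma exists_mul_pow_four_le_quarter {P : ℝ} (hP : 0 ≤ P) :
    ∃ d : ℝ, 0 < d ∧ d ≤ 1 ∧ P * d ^ 4 ≤ 1 / 4 := by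
  have hle : (4 * P + 1)⁻¹ ≤ 1 := inv_le_one_of_one_le₀ (by linarith)
  refine ⟨(4 * P + 1)⁻¹, by positivity, hle, ?_⟩
  calc P * ((4 * P + 1)⁻¹) ^ 4 ≤ P * (4 * P + 1)⁻¹ := by
        gcongr
        exact pow_le_of_le_one (by positivity) hle (by norm_num)
    _ ≤ 1 / 4 := by
        rw [← div_eq_mul_inv, div_le_div_iff₀ (by positivity) (by norm_num)]
        linarith

lemma exists_div_le_quarter {R : ℝ} (hR : 0 ≤ R) : ∃ m : ℕ, m ≠ 0 ∧ R / m ≤ 1 / 4 := by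
  obtain ⟨m, hm⟩ := exists_nat_gt (4 * R)
  have hm0 : (0 : ℝ) < m := lt_of_le_of_lt (by positivity) hm
  refine ⟨m, by exact_mod_cast hm0.ne', ?_⟩
  rw [div_le_div_iff₀ hm0 (by norm_num)]
  linarith

/-- `improve` turns the least bound `G₀` into one of the form `G₀ / 2 + B * M ^ 2`,
hence `G₀ ≤ 2 * B * M ^ 2`. -/
lemma exists_hilbertFactorBound_of_opBoundedBy (hcot : HasCotype QZ.q 2)
    (hdual : DualHasCotype2 QE.q) :
    ∃ B, 0 ≤ B ∧ ∀ (u : E →ₗ[ℝ] Z) (M G : ℝ), 0 ≤ M → OpBoundedBy QE.q QZ.q u M →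
      HilbertFactorBound QE QZ u G → HilbertFactorBound QE QZ u (B * M ^ 2) := by
  obtain ⟨C, -, hcot⟩ := hcot
  obtain ⟨C', -, hdual⟩ := hdual
  let P := C ^ 2 * QZ.k ^ 2 * (2 * QZ.k ^ 2 * C' ^ 2)
  obtain ⟨d, hd, hd1, hdP⟩ := exists_mul_pow_four_le_quarter (P := P) (by positivity)
  obtain ⟨m, hm, hmP⟩ :=
    exists_div_le_quarter (R := P * (2 * QZ.k ^ 2 * (d ^ 2)⁻¹)) (by positivity)
  let B := P * (2 * QZ.k ^ 2 * (QE.k ^ m) ^ 2 * (d ^ 2)⁻¹)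
  refine ⟨2 * B, by positivity, fun u M G hM hu h => ?_⟩
  obtain ⟨G₀, h₀, hleast⟩ := h.exists_least
  have hG₀ := h₀.nonneg
  have hself : G₀ ≤ G₀ / 2 + B * M ^ 2 :=
    calc G₀ ≤ C ^ 2 * QZ.k ^ 2 * (2 * QZ.k ^ 2 * (2 * QZ.k ^ 2 *
            (G₀ / m + (M * QE.k ^ m) ^ 2) * (d ^ 2)⁻¹ + d ^ 4 * G₀) * C' ^ 2) :=
          hleast _ <| h₀.improve hM hu hm hd hd1 hcot fun n f hf =>
            two_pow_mul_sum_sq_le_signSqSum (hdual n f hf)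
      _ = P * (2 * QZ.k ^ 2 * (d ^ 2)⁻¹) / m * G₀ + P * d ^ 4 * G₀ + B * M ^ 2 := by
          simp only [P, B]; ring
      _ ≤ 1 / 4 * G₀ + 1 / 4 * G₀ + B * M ^ 2 := by gcongr
      _ = G₀ / 2 + B * M ^ 2 := by ring
  exact h₀.mono (by linarith)

end Bootstrap

section FiniteRank

variable {E : Type uE} {Z : Type uZ} [AddCommGroup E] [Module ℝ E] [AddCommGroup Z] [Module ℝ Z]
  {QE : QuasiNormOn E} {QZ : QuasiNormOn Z} {u : E →ₗ[ℝ] Z} {ι : Type*} [Fintype ι]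

lemma QuasiNormOn.exists_mul_norm_le_q_sum_smul {y : ι → Z} (hy : LinearIndependent ℝ y) :
    ∃ δ > 0, ∀ v : EuclideanSpace ℝ ι, δ * ‖v‖ ≤ QZ.q (∑ i, v i • y i) := by
  let f : EuclideanSpace ℝ ι → ℝ := fun v => QZ.q (∑ i, v i • y i)
  have hf : ∀ v, 0 ≤ f v := fun v => QZ.nonneg _
  have hfadd : ∀ v w, f (v + w) ≤ QZ.k * (f v + f w) := fun v w => by
    simp only [f, PiLp.add_apply, add_smul, Finset.sum_add_distrib]
    exact QZ.tri _ _
  have hfsmul : ∀ (r : ℝ) v, f (r • v) = |r| * f v := fun r v => by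
    simp only [f, PiLp.smul_apply, smul_eq_mul, mul_smul, ← Finset.smul_sum, QZ.smul_eq]
  have hfpos : ∀ v, v ≠ 0 → 0 < f v := fun v hv => (hf v).lt_of_ne' fun h => hv <| by
    ext i
    exact Fintype.linearIndependent_iff.1 hy _ ((QZ.eq_zero_iff _).1 h) i
  obtain ⟨L, hL, hfL⟩ := QZ.exists_q_sum_smul_le_norm y
  obtain ⟨δ, hδ, hsphere⟩ : ∃ δ > 0, ∀ v ∈ Metric.sphere (0 : EuclideanSpace ℝ ι) 1,
      δ ≤ lipschitzEnvelope f L v := by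
    refine (isCompact_sphere 0 1).exists_forall_le'
      (continuous_lipschitzEnvelope hL hf).continuousOn fun v hv => ?_
    exact pos_of_mul_pos_right ((hfpos v (ne_zero_of_mem_unit_sphere ⟨v, hv⟩)).trans_le
      (le_mul_lipschitzEnvelope QZ.k_pos hfL hfadd v)) QZ.k_pos.le
  refine ⟨δ, hδ, fun v => ?_⟩
  obtain rfl | hv := eq_or_ne v 0
  · simpa using QZ.nonneg _
  have hpos : 0 < ‖v‖ := norm_pos_iff.2 hv
  have hunit := (hsphere (‖v‖⁻¹ • v) (by simp [norm_smul, hpos.ne'])).trans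
    (lipschitzEnvelope_le hL hf _)
  rwa [hfsmul, abs_of_pos (inv_pos.2 hpos), ← div_eq_inv_mul, le_div_iff₀ hpos] at hunit

lemma HilbertFactorBound.of_euclideanSpace (φ : E →ₗ[ℝ] EuclideanSpace ℝ ι) {A B : ℝ}
    (hφu : ∀ x, QZ.q (u x) ≤ A * ‖φ x‖) (hφ : ∀ x, ‖φ x‖ ≤ B * QE.q x) :
    HilbertFactorBound QE QZ u (A ^ 2 * B ^ 2) where
  nonneg := by positivity
  sum_sq_le κ ν _ _ a ha x :=
    calc ∑ i, QZ.q (u (∑ j, a i j • x j)) ^ 2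
        ≤ ∑ i, A ^ 2 * ∑ l, (∑ j, a i j * φ (x j) l) ^ 2 := by
          gcongr with i
          have hnorm := pow_le_pow_left₀ (QZ.nonneg _) (hφu (∑ j, a i j • x j)) 2
          simpa [mul_pow, EuclideanSpace.real_norm_sq_eq] using hnorm
      _ = A ^ 2 * ∑ l, ∑ i, (∑ j, a i j * φ (x j) l) ^ 2 := by
          rw [← Finset.mul_sum, Finset.sum_comm]
      _ ≤ A ^ 2 * ∑ l, ∑ j, φ (x j) l ^ 2 := by
          gcongr with l
          simpa only [one_mul] using ha fun j => φ (x j) l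
      _ = A ^ 2 * ∑ j, ‖φ (x j)‖ ^ 2 := by
          rw [Finset.sum_comm]
          simp only [EuclideanSpace.real_norm_sq_eq]
      _ ≤ A ^ 2 * ∑ j, B ^ 2 * QE.q (x j) ^ 2 := by
          gcongr with j
          rw [← mul_pow]
          exact pow_le_pow_left₀ (norm_nonneg _) (hφ _) 2
      _ = A ^ 2 * B ^ 2 * ∑ j, QE.q (x j) ^ 2 := by rw [← Finset.mul_sum, mul_assoc]

lemma IsBddOp.exists_hilbertFactorBound_of_finite_range (hu : IsBddOp QE.q QZ.q u)
    (hfin : Module.Finite ℝ (LinearMap.range u)) : ∃ G, HilbertFactorBound QE QZ u G := by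
  obtain ⟨M, -, hM⟩ := hu
  let b := Module.finBasis ℝ (LinearMap.range u)
  let φ : E →ₗ[ℝ] EuclideanSpace ℝ (Fin (Module.finrank ℝ (LinearMap.range u))) :=
    (WithLp.linearEquiv 2 ℝ _).symm.toLinearMap ∘ₗ b.equivFun.toLinearMap ∘ₗ u.rangeRestrict
  have hφ : ∀ x, ∑ i, φ x i • (b i : Z) = u x := fun x => by
    have h := congrArg Subtype.val (b.sum_equivFun (u.rangeRestrict x))
    simp only [Submodule.coe_sum, Submodule.coe_smul] at h
    exact h
  obtain ⟨L, -, hL⟩ := QZ.exists_q_sum_smul_le_norm fun i => (b i : Z)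
  obtain ⟨δ, hδ, hlower⟩ := QuasiNormOn.exists_mul_norm_le_q_sum_smul (QZ := QZ)
    (b.linearIndependent.map' (LinearMap.range u).subtype (Submodule.ker_subtype _))
  refine ⟨_, .of_euclideanSpace φ (A := L) (B := M / δ) (fun x => ?_) fun x => ?_⟩
  · simpa only [hφ] using hL (φ x)
  · rw [div_mul_eq_mul_div, le_div_iff₀ hδ, mul_comm]
    have hx := hlower (φ x)
    simp only [Function.comp_apply, Submodule.subtype_apply, hφ] at hx
    exact hx.trans (hM x)

end FiniteRank

section BoundedOperators

variable {E : Type uE} {V : Type uV} {W : Type uW} [AddCommGroup E] [Module ℝ E]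
  [AddCommGroup V] [Module ℝ V] [AddCommGroup W] [Module ℝ W] {QE : QuasiNormOn E}
  {QV : QuasiNormOn V}

lemma OpBoundedBy.comp {qE : E → ℝ} {qV : V → ℝ} {qW : W → ℝ} {A : E →ₗ[ℝ] V} {D : V →ₗ[ℝ] W}
    {M N : ℝ} (hN : 0 ≤ N) (hD : OpBoundedBy qV qW D N) (hA : OpBoundedBy qE qV A M) :
    OpBoundedBy qE qW (D ∘ₗ A) (N * M) := fun x => by
  refine (hD _).trans ?_
  rw [mul_assoc]
  exact mul_le_mul_of_nonneg_left (hA x) hN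

lemma IsBddOp.comp {qE : E → ℝ} {qV : V → ℝ} {qW : W → ℝ} {A : E →ₗ[ℝ] V} {D : V →ₗ[ℝ] W}
    (hD : IsBddOp qV qW D) (hA : IsBddOp qE qV A) : IsBddOp qE qW (D ∘ₗ A) := by
  obtain ⟨N, hN, hD⟩ := hD
  obtain ⟨M, hM, hA⟩ := hA
  exact ⟨N * M, mul_nonneg hN hM, hD.comp hN hA⟩

lemma IsBddOp.add {qE : E → ℝ} {u v : E →ₗ[ℝ] V} (hu : IsBddOp qE QV.q u)
    (hv : IsBddOp qE QV.q v) : IsBddOp qE QV.q (u + v) := by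
  obtain ⟨M, hM, hu⟩ := hu
  obtain ⟨N, hN, hv⟩ := hv
  have hk := QV.k_pos
  refine ⟨QV.k * (M + N), by positivity, fun x => ?_⟩
  calc QV.q (u x + v x) ≤ QV.k * (QV.q (u x) + QV.q (v x)) := QV.tri _ _
    _ ≤ QV.k * (M * qE x + N * qE x) := by gcongr; exacts [hu x, hv x]
    _ = QV.k * (M + N) * qE x := by ring

lemma IsBddOp.smul {qE : E → ℝ} {u : E →ₗ[ℝ] V} (hu : IsBddOp qE QV.q u) (r : ℝ) :
    IsBddOp qE QV.q (r • u) := by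
  obtain ⟨M, hM, hu⟩ := hu
  refine ⟨|r| * M, by positivity, fun x => ?_⟩
  rw [LinearMap.smul_apply, QV.smul_eq, mul_assoc]
  exact mul_le_mul_of_nonneg_left (hu x) (abs_nonneg r)

lemma OpBoundedBy.of_tendsto {qE : E → ℝ} {u : E →ₗ[ℝ] V} {M : ℝ} {α : Type*} {l : Filter α}
    [l.NeBot] {w : α → E →ₗ[ℝ] V} (hw : ∀ᶠ t in l, OpBoundedBy qE QV.q (w t) M)
    (hlim : ∀ x, Filter.Tendsto (fun t => QV.q (w t x - u x)) l (nhds 0)) :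
    OpBoundedBy qE QV.q u (QV.k * M) := fun x => by
  have hk := QV.k_pos
  have hsum : Filter.Tendsto (fun t => QV.k * (M * qE x + QV.q (w t x - u x))) l
      (nhds (QV.k * (M * qE x + 0))) := ((hlim x).const_add _).const_mul _
  rw [add_zero, ← mul_assoc] at hsum
  refine ge_of_tendsto hsum ?_
  filter_upwards [hw] with t ht
  calc QV.q (u x) = QV.q (w t x + -(w t x - u x)) := by congr 1; abel
    _ ≤ QV.k * (QV.q (w t x) + QV.q (w t x - u x)) := by
        rw [← QV.q_neg (w t x - u x)]; exact QV.tri _ _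
    _ ≤ QV.k * (M * qE x + QV.q (w t x - u x)) := by gcongr; exact ht x

end BoundedOperators

section StrongApproximation

variable {E : Type uE} {V : Type uV} {Z : Type uZ} [AddCommGroup E] [Module ℝ E]
  [AddCommGroup V] [Module ℝ V] [AddCommGroup Z] [Module ℝ Z] {QE : QuasiNormOn E}
  {QV : QuasiNormOn V} {QZ : QuasiNormOn Z}

lemma finite_range_comp_comp {A : E →ₗ[ℝ] V} {w : V →ₗ[ℝ] V} (D : V →ₗ[ℝ] Z)
    (hw : Module.Finite ℝ (LinearMap.range w)) :
    Module.Finite ℝ (LinearMap.range (D ∘ₗ w ∘ₗ A)) := by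
  have hle : LinearMap.range (D ∘ₗ w ∘ₗ A) ≤ (LinearMap.range w).map D := by
    rintro _ ⟨x, rfl⟩
    exact ⟨w (A x), ⟨A x, rfl⟩, rfl⟩
  exact Submodule.finiteDimensional_of_le hle

/-- The bound of `exists_hilbertFactorBound_of_opBoundedBy` depends only on the operator norm, so
it survives pointwise limits of bounded nets. -/
lemma netClosed_hilbertFactorBound (hcot : HasCotype QZ.q 2) (hdual : DualHasCotype2 QE.q)
    {A : E →ₗ[ℝ] V} {D : V →ₗ[ℝ] Z} (hA : IsBddOp QE.q QV.q A) (hD : IsBddOp QV.q QZ.q D) :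
    NetClosed QV.q QV.q
      {w | IsBddOp QV.q QV.q w ∧ ∃ G, HilbertFactorBound QE QZ (D ∘ₗ w ∘ₗ A) G} := by
  obtain ⟨B, -, hB⟩ := exists_hilbertFactorBound_of_opBoundedBy hcot hdual
  obtain ⟨M, hM, hA⟩ := hA
  obtain ⟨N, hN, hD⟩ := hD
  rintro l _ hmem ⟨K, hK⟩ v hv
  have hbdd : ∀ᶠ w in l, OpBoundedBy QV.q QV.q w |K| := by
    filter_upwards [hK] with w hw x
    exact (hw x).trans (mul_le_mul_of_nonneg_right (le_abs_self K) (QV.nonneg x))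
  refine ⟨⟨_, mul_nonneg QV.k_pos.le (abs_nonneg K), .of_tendsto hbdd hv⟩, _,
    .of_tendsto (G := B * (N * (|K| * M)) ^ 2) (l := l) (v := fun w => D ∘ₗ w ∘ₗ A) ?_ fun x => ?_⟩
  · filter_upwards [hbdd, hmem] with w hw ⟨_, G, hG⟩
    exact hB _ _ G (by positivity) (hD.comp hN (hw.comp (abs_nonneg K) hA)) hG
  · refine squeeze_zero (fun w => QZ.nonneg _) (fun w => ?_)
      (by simpa only [mul_zero] using (hv (A x)).const_mul N)
    simpa only [LinearMap.comp_apply, map_sub] using hD (w (A x) - v (A x))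

lemma StronglyApproximable.exists_hilbertFactorBound_comp
    (hV : StronglyApproximable QV.q QV.q LinearMap.id) (hcot : HasCotype QZ.q 2)
    (hdual : DualHasCotype2 QE.q) {A : E →ₗ[ℝ] V} {D : V →ₗ[ℝ] Z} (hA : IsBddOp QE.q QV.q A)
    (hD : IsBddOp QV.q QZ.q D) : ∃ G, HilbertFactorBound QE QZ (D ∘ₗ A) G := by
  refine (hV {w | IsBddOp QV.q QV.q w ∧ ∃ G, HilbertFactorBound QE QZ (D ∘ₗ w ∘ₗ A) G}
    (fun w hw => hw.1) ?_ ?_ ?_ (netClosed_hilbertFactorBound hcot hdual hA hD)).2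
  · rintro w w' ⟨hw, G, hG⟩ ⟨hw', G', hG'⟩
    exact ⟨hw.add hw', _, by simpa only [LinearMap.add_comp, LinearMap.comp_add] using hG.add hG'⟩
  · rintro r w ⟨hw, G, hG⟩
    exact ⟨hw.smul r, _, by simpa only [LinearMap.smul_comp, LinearMap.comp_smul] using hG.smul r⟩
  · exact fun w hw hfin => ⟨hw,
      (hD.comp (hw.comp hA)).exists_hilbertFactorBound_of_finite_range
        (finite_range_comp_comp D hfin)⟩

end StrongApproximation

section LocalConvexity

variable {E : Type uE} {Z : Type uZ} [AddCommGroup E] [Module ℝ E] [AddCommGroup Z] [Module ℝ Z]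
  {QE : QuasiNormOn E} {QZ : QuasiNormOn Z}

lemma QuasiNormOn.isLocallyConvexQN_of_le_envelope {K : ℝ}
    (h : ∀ x, QE.q x ≤ K * QE.envelope x) : IsLocallyConvexQN QE.q :=
  ⟨QE.envelope, 1, K, one_pos, map_add_le_add _,
    fun r x => by rw [map_smul_eq_mul, Real.norm_eq_abs],
    fun x => ⟨by rw [one_mul]; exact QE.envelope_le x, h x⟩⟩

lemma isLocallyConvexQN_of_forall_hilbertFactorBound {I : Type*} [Nonempty I]
    {T : I → E →ₗ[ℝ] Z} {c G : ℝ} (hc : 0 < c)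
    (hcT : ∀ x, c * QE.q x ≤ sSup (Set.range fun i => QZ.q (T i x)))
    (hT : ∀ i, HilbertFactorBound QE QZ (T i) G) : IsLocallyConvexQN QE.q := by
  refine QE.isLocallyConvexQN_of_le_envelope (K := √G / c) fun x => ?_
  rw [div_mul_eq_mul_div, le_div_iff₀ hc, mul_comm]
  refine (hcT x).trans (csSup_le (Set.range_nonempty _) ?_)
  rintro _ ⟨i, rfl⟩
  beta_reduce
  rw [← Real.sqrt_sq (QZ.nonneg _), ← Real.sqrt_sq (apply_nonneg QE.envelope x),
    ← Real.sqrt_mul (hT i).nonneg]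
  exact Real.sqrt_le_sqrt ((hT i).apply_sq_le x)

end LocalConvexity

theorem subspace_locally_convex_of_dual_cotype2_general
    {X : Type uX} {Z : Type uZ} [AddCommGroup X] [Module ℝ X] [AddCommGroup Z] [Module ℝ Z]
    (QX : QuasiNormOn X) (QZ : QuasiNormOn Z) (hsub : Subordinate QX.q QZ.q)
    (hsap : StronglyApproximable QX.q QX.q (LinearMap.id) ∨
            StronglyApproximable QZ.q QZ.q (LinearMap.id))
    (hcotZ : HasCotype QZ.q 2) (Y : Submodule ℝ X)
    (hdualY : DualHasCotype2 (fun y : ↥Y => QX.q y.1)) :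
    IsLocallyConvexQN (fun y : ↥Y => QX.q y.1) := by
  obtain ⟨I, _, T, c, C, hc, hC, hTC, hcT⟩ := hsub
  let QY := QX.restrict Y
  let S (i : I) : X →ₗ[ℝ] Z := LinearMap.proj i ∘ₗ T
  have hincl : IsBddOp QY.q QX.q Y.subtype := ⟨1, zero_le_one, fun y => (one_mul _).ge⟩
  have hid : IsBddOp QZ.q QZ.q LinearMap.id := ⟨1, zero_le_one, fun z => (one_mul _).ge⟩
  have hS (i : I) : IsBddOp QX.q QZ.q (S i) := ⟨C, hC.le, fun x => hTC x i⟩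
  have hfactor (i : I) : ∃ G, HilbertFactorBound QY QZ (S i ∘ₗ Y.subtype) G := by
    rcases hsap with hX | hZ
    · exact hX.exists_hilbertFactorBound_comp hcotZ hdualY hincl (hS i)
    · simpa only [LinearMap.id_comp] using
        hZ.exists_hilbertFactorBound_comp hcotZ hdualY ((hS i).comp hincl) hid
  obtain ⟨B, -, hB⟩ := exists_hilbertFactorBound_of_opBoundedBy (QE := QY) hcotZ hdualY
  refine isLocallyConvexQN_of_forall_hilbertFactorBound (QE := QY) (QZ := QZ)
    (T := fun i => S i ∘ₗ Y.subtype) (G := B * C ^ 2) hc (fun y => hcT y) fun i => ?_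
  obtain ⟨G, hG⟩ := hfactor i
  exact hB _ C G hC.le (fun y => hTC y i) hG

/-- **Theorem 9 (1)**. Let `Z` be a quasi-Banach space of cotype 2 and let `X` be
subordinate to `Z`; assume `X` or `Z` has the strong approximation property. If `Y` is a
closed subspace of `X` whose dual has cotype 2, then `Y` is locally convex. -/
theorem subspace_locally_convex_of_dual_cotype2
    {X : Type uX} {Z : Type uZ} [AddCommGroup X] [Module ℝ X] [AddCommGroup Z] [Module ℝ Z]
    (QX : QuasiNormOn X) (QZ : QuasiNormOn Z)
    (hXcomplete : CauchyComplete QX.q) (hZcomplete : CauchyComplete QZ.q)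
    (hsub : Subordinate QX.q QZ.q)
    (hsap : StronglyApproximable QX.q QX.q (LinearMap.id) ∨
            StronglyApproximable QZ.q QZ.q (LinearMap.id))
    (hcotZ : HasCotype QZ.q 2)
    (Y : Submodule ℝ X) (hYclosed : QClosed QX.q (Y : Set X))
    (hdualY : DualHasCotype2 (fun y : ↥Y => QX.q y.1)) :
    IsLocallyConvexQN (fun y : ↥Y => QX.q y.1) :=
  subspace_locally_convex_of_dual_cotype2_general QX QZ hsub hsap hcotZ Y hdualY
end

section
/- There is a constant C depending only on r (0 < r ≤ 1) such that every finite-dimensional r-normed space E satisfies d_E ≤ C d_{Ê}^{2/r−1} and δ_E ≤ C d_{Ê}^{2/r−2}, where Ê denotes the Banach envelope of E. -/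
open scoped ENNReal NNReal BigOperators

universe uX uY uZ uW uE uO uG uV

section Defs

variable {X : Type uX} {Y : Type uY} {Z : Type uZ} {W : Type uW}
  [AddCommGroup X] [Module ℝ X] [AddCommGroup Y] [Module ℝ Y]
  [AddCommGroup Z] [Module ℝ Z] [AddCommGroup W] [Module ℝ W]

/-- An `r`-norm on a real vector space (`0 < r ≤ 1`): the quasi-norm satisfies
`‖x+y‖^r ≤ ‖x‖^r + ‖y‖^r`. -/
structure RNormOn (X : Type uX) [AddCommGroup X] [Module ℝ X] (r : ℝ) : Type uX where
  q : X → ℝ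
  nonneg : ∀ x, 0 ≤ q x
  eq_zero_iff : ∀ x, q x = 0 ↔ x = 0
  smul_eq : ∀ (a : ℝ) (x : X), q (a • x) = |a| * q x
  rtri : ∀ x y, q (x + y) ^ r ≤ q x ^ r + q y ^ r

/-- `γ₂(u) ≤ c` : `u` factors through a Hilbert space (every real Hilbert space being
isometric to some `ℓ²(ι)`) with product of the two operator norms at most `c`. -/
def Gamma2Le (qX : X → ℝ) (qY : Y → ℝ) (u : X →ₗ[ℝ] Y) (c : ℝ) : Prop :=
  ∃ (ι : Type uX) (w : X →ₗ[ℝ] lp (fun _ : ι => ℝ) 2)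
    (v : lp (fun _ : ι => ℝ) 2 →ₗ[ℝ] Y) (Cw Cv : ℝ),
    0 ≤ Cw ∧ 0 ≤ Cv ∧ (∀ x, ‖w x‖ ≤ Cw * qX x) ∧ (∀ h, qY (v h) ≤ Cv * ‖h‖) ∧
    (∀ x, v (w x) = u x) ∧ Cv * Cw ≤ c

/-- The Banach envelope norm of `(X,q)` : the gauge (Minkowski functional) of the
convex hull of the unit ball of `q`. -/
noncomputable def envNorm (q : X → ℝ) : X → ℝ := gauge (convexHull ℝ {x | q x ≤ 1})

end Defs

/-!
The idea is Maurey's empirical method. Let `T : E → H` be a map into a Hilbert space with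
`‖x‖_Ê ≤ ‖T x‖ ≤ D ‖x‖_Ê`. A point `x` of the convex hull of the unit ball of `E` is approximated
by the mean `y` of `N` points of that ball, up to an error `‖T (x - y)‖ ≤ D / √N`. The mean
satisfies `‖y‖_E ^ r ≤ N ^ (1 - r)`, and `‖x - y‖_E ≤ δ_E D / √N`, so
`δ_E ^ r ≤ N ^ (1 - r) + (δ_E D / √N) ^ r`. For a suitable `N` of the order of `D ^ 2` the last
term is at most `δ_E ^ r / 2` and can be absorbed, which bounds `δ_E`. Finally `d_E ≤ δ_E d_Ê`,
since `‖·‖_Ê ≤ ‖·‖_E ≤ δ_E ‖·‖_Ê`.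
-/

section EmpiricalMean

variable {H : Type*} [NormedAddCommGroup H] [InnerProductSpace ℝ H] {A : Set H} {R : ℝ} {x : H}

theorem exists_mem_norm_add_sub_sq_le (hA : ∀ a ∈ A, ‖a‖ ≤ R) (hx : x ∈ convexHull ℝ A) (e : H) :
    ∃ a ∈ A, ‖e + (a - x)‖ ^ 2 ≤ ‖e‖ ^ 2 + R ^ 2 := by
  obtain ⟨a, ha, hax⟩ : ∃ a ∈ A, inner ℝ (e - x) a ≤ inner ℝ (e - x) x :=
    ((innerₛₗ ℝ (e - x)).concaveOn (convex_convexHull ℝ A)).exists_le_of_mem_convexHull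
      (subset_convexHull ℝ A) hx
  refine ⟨a, ha, ?_⟩
  calc ‖e + (a - x)‖ ^ 2 = ‖(e - x) + a‖ ^ 2 := by congr 2; abel
    _ = ‖e - x‖ ^ 2 + 2 * inner ℝ (e - x) a + ‖a‖ ^ 2 := norm_add_sq_real _ _
    _ ≤ ‖e - x‖ ^ 2 + 2 * inner ℝ (e - x) x + ‖x‖ ^ 2 + R ^ 2 := by
        have := pow_le_pow_left₀ (norm_nonneg a) (hA a ha) 2
        linarith [sq_nonneg ‖x‖]
    _ = ‖e‖ ^ 2 + R ^ 2 := by rw [← norm_add_sq_real, sub_add_cancel]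

theorem exists_norm_sum_sub_smul_sq_le (hA : ∀ a ∈ A, ‖a‖ ≤ R) (hx : x ∈ convexHull ℝ A) (n : ℕ) :
    ∃ a : Fin n → H, (∀ i, a i ∈ A) ∧ ‖∑ i, a i - (n : ℝ) • x‖ ^ 2 ≤ n * R ^ 2 := by
  induction n with
  | zero => exact ⟨Fin.elim0, fun i => i.elim0, by simp⟩
  | succ n ih =>
    obtain ⟨a, ha, hle⟩ := ih
    obtain ⟨b, hb, hble⟩ := exists_mem_norm_add_sub_sq_le hA hx (∑ i, a i - (n : ℝ) • x)
    refine ⟨Fin.cons b a, Fin.forall_fin_succ.2 ⟨hb, ha⟩, ?_⟩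
    have hsum : ∑ i, (Fin.cons b a : Fin (n + 1) → H) i - ((n + 1 : ℕ) : ℝ) • x =
        (∑ i, a i - (n : ℝ) • x) + (b - x) := by
      rw [Fin.sum_cons]
      push_cast
      module
    rw [hsum]
    push_cast
    linarith

theorem exists_norm_sub_mean_le (hA : ∀ a ∈ A, ‖a‖ ≤ R) (hx : x ∈ convexHull ℝ A) {n : ℕ}
    (hn : 0 < n) :
    ∃ a : Fin n → H, (∀ i, a i ∈ A) ∧ ‖x - (n : ℝ)⁻¹ • ∑ i, a i‖ ≤ R / √n := by
  obtain ⟨a, ha, hle⟩ := exists_norm_sum_sub_smul_sq_le hA hx n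
  have hn' : (0 : ℝ) < n := Nat.cast_pos.2 hn
  have hR : 0 ≤ R := (norm_nonneg _).trans (hA _ (ha ⟨0, hn⟩))
  refine ⟨a, ha, ?_⟩
  calc ‖x - (n : ℝ)⁻¹ • ∑ i, a i‖ = ‖(n : ℝ)⁻¹ • (∑ i, a i - (n : ℝ) • x)‖ := by
        rw [smul_sub, inv_smul_smul₀ hn'.ne', norm_sub_rev]
    _ = (n : ℝ)⁻¹ * ‖∑ i, a i - (n : ℝ) • x‖ := by
        rw [norm_smul, Real.norm_of_nonneg (by positivity)]
    _ ≤ (n : ℝ)⁻¹ * (√n * R) := by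
        gcongr
        rw [← sq_le_sq₀ (norm_nonneg _) (by positivity), mul_pow, Real.sq_sqrt hn'.le]
        exact hle
    _ = R / √n := by
        field_simp
        rw [Real.sq_sqrt hn'.le]

end EmpiricalMean

namespace Gamma2Le

variable {X : Type uX} {Y : Type uY} [AddCommGroup X] [Module ℝ X] [AddCommGroup Y] [Module ℝ Y]
  {pX qX : X → ℝ} {pY qY : Y → ℝ} {u : X →ₗ[ℝ] Y} {c B : ℝ}

theorem nonneg (h : Gamma2Le qX qY u c) : 0 ≤ c := by
  obtain ⟨-, -, -, Cw, Cv, hCw, hCv, -, -, -, hc⟩ := h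
  exact (mul_nonneg hCv hCw).trans hc

theorem exists_le_norm_le (h : Gamma2Le qX qY u c) (hqX : ∀ x, 0 ≤ qX x) :
    ∃ (ι : Type uX) (T : X →ₗ[ℝ] lp (fun _ : ι => ℝ) 2),
      (∀ x, qY (u x) ≤ ‖T x‖) ∧ ∀ x, ‖T x‖ ≤ c * qX x := by
  obtain ⟨ι, w, v, Cw, Cv, -, hCv, hw, hv, hvw, hc⟩ := h
  have hnorm (x : X) : ‖(Cv • w) x‖ = Cv * ‖w x‖ := by
    rw [LinearMap.smul_apply, norm_smul, Real.norm_of_nonneg hCv]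
  refine ⟨ι, Cv • w, fun x => ?_, fun x => ?_⟩
  · rw [hnorm, ← hvw]
    exact hv (w x)
  · calc ‖(Cv • w) x‖ = Cv * ‖w x‖ := hnorm x
      _ ≤ Cv * (Cw * qX x) := by gcongr; exact hw x
      _ = Cv * Cw * qX x := (mul_assoc _ _ _).symm
      _ ≤ c * qX x := mul_le_mul_of_nonneg_right hc (hqX x)

theorem of_le_of_le_mul (h : Gamma2Le pX pY u c) (hX : ∀ x, pX x ≤ qX x) (hB : 0 ≤ B)
    (hY : ∀ y, qY y ≤ B * pY y) : Gamma2Le qX qY u (B * c) := by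
  obtain ⟨ι, w, v, Cw, Cv, hCw, hCv, hw, hv, hvw, hc⟩ := h
  refine ⟨ι, w, v, Cw, B * Cv, hCw, mul_nonneg hB hCv, fun x => ?_, fun y => ?_, hvw, ?_⟩
  · exact (hw x).trans (mul_le_mul_of_nonneg_left (hX x) hCw)
  · rw [mul_assoc]
    exact (hY (v y)).trans (mul_le_mul_of_nonneg_left (hv y) hB)
  · rw [mul_assoc]
    exact mul_le_mul_of_nonneg_left hc hB

end Gamma2Le

namespace RNormOn

variable {E : Type*} [AddCommGroup E] [Module ℝ E] {r : ℝ} (Q : RNormOn E r)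

theorem map_zero : Q.q 0 = 0 := (Q.eq_zero_iff 0).2 rfl

variable {Q} in
theorem pos_of_ne_zero {x : E} (hx : x ≠ 0) : 0 < Q.q x :=
  (Q.nonneg x).lt_of_ne' (mt (Q.eq_zero_iff x).1 hx)

theorem smul_eq_of_nonneg {a : ℝ} (ha : 0 ≤ a) (x : E) : Q.q (a • x) = a * Q.q x := by
  rw [Q.smul_eq, abs_of_nonneg ha]

theorem rpow_sum_le (hr0 : 0 < r) {ι : Type*} (s : Finset ι) (f : ι → E) :
    Q.q (∑ i ∈ s, f i) ^ r ≤ ∑ i ∈ s, Q.q (f i) ^ r :=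
  Finset.le_sum_of_subadditive (fun x => Q.q x ^ r)
    (by rw [Q.map_zero, Real.zero_rpow hr0.ne']) Q.rtri s f

theorem rpow_sum_le_card (hr0 : 0 < r) {ι : Type*} [Fintype ι] {f : ι → E}
    (hf : ∀ i, Q.q (f i) ≤ 1) : Q.q (∑ i, f i) ^ r ≤ Fintype.card ι := by
  refine (Q.rpow_sum_le hr0 _ f).trans ?_
  simpa using Finset.sum_le_card_nsmul Finset.univ (fun i => Q.q (f i) ^ r) 1
    fun i _ => Real.rpow_le_one (Q.nonneg _) (hf i) hr0.le

theorem rpow_mean_le (hr0 : 0 < r) {n : ℕ} (hn : 0 < n) {f : Fin n → E}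
    (hf : ∀ i, Q.q (f i) ≤ 1) : Q.q ((n : ℝ)⁻¹ • ∑ i, f i) ^ r ≤ (n : ℝ) ^ (1 - r) := by
  have hn' : (0 : ℝ) < n := Nat.cast_pos.2 hn
  calc Q.q ((n : ℝ)⁻¹ • ∑ i, f i) ^ r = ((n : ℝ) ^ r)⁻¹ * Q.q (∑ i, f i) ^ r := by
        rw [Q.smul_eq_of_nonneg (by positivity), Real.mul_rpow (by positivity) (Q.nonneg _),
          Real.inv_rpow hn'.le]
    _ ≤ ((n : ℝ) ^ r)⁻¹ * n := by
        gcongr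
        simpa using Q.rpow_sum_le_card hr0 hf
    _ = (n : ℝ) ^ (1 - r) := by rw [Real.rpow_sub hn', Real.rpow_one, inv_mul_eq_div]

theorem envNorm_le (x : E) : envNorm Q.q x ≤ Q.q x := by
  rcases eq_or_ne x 0 with rfl | hx
  · rw [envNorm, gauge_zero, Q.map_zero]
  · have hq : Q.q x ≠ 0 := (pos_of_ne_zero hx).ne'
    have hball : Q.q ((Q.q x)⁻¹ • x) ≤ 1 := by
      rw [Q.smul_eq_of_nonneg (inv_nonneg.2 (Q.nonneg x)), inv_mul_cancel₀ hq]
    exact gauge_le_of_mem (Q.nonneg x)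
      ⟨(Q.q x)⁻¹ • x, subset_convexHull ℝ _ hball, smul_inv_smul₀ hq x⟩

theorem absorbent_convexHull : Absorbent ℝ (convexHull ℝ {x | Q.q x ≤ 1}) := by
  refine Absorbent.mono ?_ (subset_convexHull ℝ _)
  rw [absorbent_iff_eventually_nhdsNE_zero]
  intro x
  have hlim : Filter.Tendsto (fun c : ℝ => |c| * Q.q x) (nhds 0) (nhds 0) :=
    Continuous.tendsto' (by fun_prop) _ _ (by simp)
  filter_upwards [(hlim.mono_left nhdsWithin_le_nhds).eventually_le_const one_pos] with c hc
  exact (Q.smul_eq c x).trans_le hc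

/-- The constants `M ≥ 0` with `‖x‖_E ≤ M ‖x‖_Ê` for all `x`. The least one is `δ_E`; the set is
empty when there is none, i.e. when `δ_E = ∞`. -/
def envBounds : Set ℝ := {M | 0 ≤ M ∧ ∀ x, Q.q x ≤ M * envNorm Q.q x}

variable {Q} {M D : ℝ}

theorem isLeast_sInf_envBounds (hQ : Q.envBounds.Nonempty) :
    IsLeast Q.envBounds (sInf Q.envBounds) := by
  refine IsClosed.isLeast_csInf ?_ hQ ⟨0, fun _ hM => hM.1⟩
  have hinter : Q.envBounds = Set.Ici 0 ∩ ⋂ x, {M | Q.q x ≤ M * envNorm Q.q x} := by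
    rw [← Set.ofPred_forall]
    rfl
  rw [hinter]
  exact isClosed_Ici.inter (isClosed_iInter fun x => isClosed_le (by fun_prop) (by fun_prop))

theorem mem_envBounds_of_forall_mem_convexHull (hM : 0 ≤ M)
    (h : ∀ x ∈ convexHull ℝ {x | Q.q x ≤ 1}, Q.q x ≤ M) : M ∈ Q.envBounds := by
  refine ⟨hM, fun x => ?_⟩
  have hlt (t : ℝ) (ht : envNorm Q.q x < t) : Q.q x ≤ M * t := by
    obtain ⟨b, hb, hbt, y, hy, rfl⟩ := exists_lt_of_gauge_lt Q.absorbent_convexHull ht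
    calc Q.q (b • y) = Q.q y * b := by rw [Q.smul_eq_of_nonneg hb.le, mul_comm]
      _ ≤ M * t := by gcongr; exact h y hy
  exact ge_of_tendsto ((continuous_const_mul M).continuousWithinAt (s := Set.Ioi _))
    (Filter.eventually_of_mem self_mem_nhdsWithin hlt)

theorem envNorm_pos (hQ : Q.envBounds.Nonempty) {x : E} (hx : x ≠ 0) : 0 < envNorm Q.q x := by
  obtain ⟨M, hM0, hM⟩ := hQ
  exact pos_of_mul_pos_right ((pos_of_ne_zero hx).trans_le (hM x)) hM0

variable (Q) in
theorem envBounds_nonempty [FiniteDimensional ℝ E] (hr0 : 0 < r) : Q.envBounds.Nonempty := by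
  refine ⟨(Module.finrank ℝ E + 1 : ℝ) ^ r⁻¹,
    mem_envBounds_of_forall_mem_convexHull (by positivity) fun x hx => ?_⟩
  obtain ⟨ι, _, z, w, hz, hind, hw, hsum, rfl⟩ := eq_pos_convex_span_of_mem_convexHull hx
  have hcard : Fintype.card ι ≤ Module.finrank ℝ E + 1 :=
    hind.card_le_finrank_succ.trans (Nat.add_le_add_right (Submodule.finrank_le _) 1)
  have hterm (i : ι) : Q.q (w i • z i) ≤ 1 := by
    rw [Q.smul_eq_of_nonneg (hw i).le]
    exact mul_le_one₀ (hsum ▸ Finset.single_le_sum (fun j _ => (hw j).le) (Finset.mem_univ i))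
      (Q.nonneg _) (hz ⟨i, rfl⟩)
  rw [Real.le_rpow_inv_iff_of_pos (Q.nonneg _) (by positivity) hr0]
  exact (Q.rpow_sum_le_card hr0 hterm).trans (mod_cast hcard)

section Euclidean

variable {H : Type*} [NormedAddCommGroup H] [InnerProductSpace ℝ H] {T : E →ₗ[ℝ] H}

theorem one_le_of_envNorm_le_of_le_mul_envNorm [Nontrivial E] (hQ : Q.envBounds.Nonempty)
    (hle : ∀ x, envNorm Q.q x ≤ ‖T x‖) (hge : ∀ x, ‖T x‖ ≤ D * envNorm Q.q x) : 1 ≤ D := by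
  obtain ⟨x, hx⟩ := exists_ne (0 : E)
  exact (le_mul_iff_one_le_left (envNorm_pos hQ hx)).1 ((hle x).trans (hge x))

theorem exists_rpow_le_and_norm_map_sub_le (hr0 : 0 < r) (hT : ∀ x, Q.q x ≤ 1 → ‖T x‖ ≤ D)
    {n : ℕ} (hn : 0 < n) {x : E} (hx : x ∈ convexHull ℝ {x | Q.q x ≤ 1}) :
    ∃ y, Q.q y ^ r ≤ (n : ℝ) ^ (1 - r) ∧ ‖T (x - y)‖ ≤ D / √n := by
  have hTx : T x ∈ convexHull ℝ (T '' {x | Q.q x ≤ 1}) :=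
    T.image_convexHull _ ▸ Set.mem_image_of_mem T hx
  obtain ⟨a, ha, hle⟩ := exists_norm_sub_mean_le (Set.forall_mem_image.2 hT) hTx hn
  choose f hf hfa using ha
  refine ⟨(n : ℝ)⁻¹ • ∑ i, f i, Q.rpow_mean_le hr0 hn hf, ?_⟩
  simpa only [map_sub, map_smul, map_sum, hfa] using hle

theorem rpow_inv_mem_envBounds (hr0 : 0 < r) (hle : ∀ x, envNorm Q.q x ≤ ‖T x‖) (hD : 0 ≤ D)
    (hge : ∀ x, ‖T x‖ ≤ D * envNorm Q.q x) (hM : M ∈ Q.envBounds) {n : ℕ} (hn : 0 < n) :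
    ((n : ℝ) ^ (1 - r) + (M * (D / √n)) ^ r) ^ r⁻¹ ∈ Q.envBounds := by
  obtain ⟨hM0, hM⟩ := hM
  refine mem_envBounds_of_forall_mem_convexHull (by positivity) fun x hx => ?_
  have hT (y : E) (hy : Q.q y ≤ 1) : ‖T y‖ ≤ D :=
    (hge y).trans (mul_le_of_le_one_right hD ((Q.envNorm_le y).trans hy))
  obtain ⟨y, hy, hxy⟩ := exists_rpow_le_and_norm_map_sub_le hr0 hT hn hx
  have hdiff : Q.q (x - y) ≤ M * (D / √n) :=
    (hM _).trans (mul_le_mul_of_nonneg_left ((hle _).trans hxy) hM0)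
  rw [Real.le_rpow_inv_iff_of_pos (Q.nonneg x) (by positivity) hr0]
  calc Q.q x ^ r = Q.q (y + (x - y)) ^ r := by rw [add_sub_cancel]
    _ ≤ Q.q y ^ r + Q.q (x - y) ^ r := Q.rtri _ _
    _ ≤ (n : ℝ) ^ (1 - r) + (M * (D / √n)) ^ r :=
        add_le_add hy (Real.rpow_le_rpow (Q.nonneg _) hdiff hr0.le)

theorem sInf_envBounds_rpow_le (hr0 : 0 < r) (hQ : Q.envBounds.Nonempty)
    (hle : ∀ x, envNorm Q.q x ≤ ‖T x‖) (hD : 0 ≤ D) (hge : ∀ x, ‖T x‖ ≤ D * envNorm Q.q x)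
    {n : ℕ} (hn : 0 < n) (hDn : (2 ^ r⁻¹ * D) ^ 2 ≤ n) :
    sInf Q.envBounds ^ r ≤ 2 * (n : ℝ) ^ (1 - r) := by
  obtain ⟨hmem, hleast⟩ := isLeast_sInf_envBounds hQ
  set δ := sInf Q.envBounds
  have hδ : δ ^ r ≤ (n : ℝ) ^ (1 - r) + (δ * (D / √n)) ^ r := by
    rw [← Real.le_rpow_inv_iff_of_pos hmem.1 (by have := hmem.1; positivity) hr0]
    exact hleast (rpow_inv_mem_envBounds hr0 hle hD hge hmem hn)
  have hhalf : (D / √n) ^ r ≤ 1 / 2 := by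
    rw [← Real.le_rpow_inv_iff_of_pos (by positivity) (by norm_num) hr0,
      Real.div_rpow zero_le_one zero_le_two, Real.one_rpow,
      div_le_div_iff₀ (by positivity) (by positivity), one_mul, mul_comm]
    exact Real.le_sqrt_of_sq_le hDn
  rw [Real.mul_rpow hmem.1 (by positivity)] at hδ
  linarith [mul_le_mul_of_nonneg_left hhalf (Real.rpow_nonneg hmem.1 r)]

theorem sInf_envBounds_le (hr0 : 0 < r) (hr1 : r ≤ 1) (hQ : Q.envBounds.Nonempty)
    (hle : ∀ x, envNorm Q.q x ≤ ‖T x‖) (hD : 1 ≤ D) (hge : ∀ x, ‖T x‖ ≤ D * envNorm Q.q x) :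
    sInf Q.envBounds ≤ 2 ^ r⁻¹ * (2 ^ r⁻¹ + 1) ^ (2 / r - 2) * D ^ (2 / r - 2) := by
  set a : ℝ := 2 ^ r⁻¹
  set n := ⌈(a * D) ^ 2⌉₊
  have hn : 0 < n := Nat.ceil_pos.2 (by positivity)
  have hn_le : (n : ℝ) ≤ ((a + 1) * D) ^ 2 :=
    calc (n : ℝ) ≤ (a * D) ^ 2 + 1 := (Nat.ceil_lt_add_one (by positivity)).le
      _ ≤ (a * D) ^ 2 + 2 * a * D ^ 2 + D ^ 2 := by
          have : 0 ≤ 2 * a * D ^ 2 := by positivity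
          linarith [one_le_pow₀ (n := 2) hD]
      _ = ((a + 1) * D) ^ 2 := by ring
  have hδ := sInf_envBounds_rpow_le hr0 hQ hle (by positivity) hge hn (Nat.le_ceil _)
  rw [← Real.le_rpow_inv_iff_of_pos (isLeast_sInf_envBounds hQ).1.1 (by positivity) hr0] at hδ
  calc sInf Q.envBounds ≤ (2 * (n : ℝ) ^ (1 - r)) ^ r⁻¹ := hδ
    _ ≤ (2 * (((a + 1) * D) ^ 2) ^ (1 - r)) ^ r⁻¹ := by
        have := sub_nonneg.2 hr1
        gcongr
    _ = a * ((a + 1) * D) ^ (2 / r - 2) := by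
        rw [Real.mul_rpow zero_le_two (by positivity), ← Real.rpow_natCast,
          ← Real.rpow_mul (by positivity), ← Real.rpow_mul (by positivity)]
        congr 2
        push_cast
        field_simp
    _ = a * (a + 1) ^ (2 / r - 2) * D ^ (2 / r - 2) := by
        rw [Real.mul_rpow (by positivity) (by positivity), mul_assoc]

end Euclidean

theorem mem_envBounds_of_gamma2Le (hr0 : 0 < r) (hr1 : r ≤ 1) (hQ : Q.envBounds.Nonempty)
    (hD : Gamma2Le (envNorm Q.q) (envNorm Q.q) LinearMap.id D) :
    2 ^ r⁻¹ * (2 ^ r⁻¹ + 1) ^ (2 / r - 2) * D ^ (2 / r - 2) ∈ Q.envBounds := by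
  have hD0 : 0 ≤ D := hD.nonneg
  refine ⟨by positivity, fun x => ?_⟩
  rcases subsingleton_or_nontrivial E with _ | _
  · rw [Subsingleton.elim x 0, Q.map_zero, envNorm, gauge_zero, mul_zero]
  · obtain ⟨ι, T, hle, hge⟩ := hD.exists_le_norm_le fun _ => gauge_nonneg _
    have hD1 : 1 ≤ D := one_le_of_envNorm_le_of_le_mul_envNorm hQ hle hge
    exact ((isLeast_sInf_envBounds hQ).1.2 x).trans
      (mul_le_mul_of_nonneg_right (sInf_envBounds_le hr0 hr1 hQ hle hD1 hge) (gauge_nonneg _))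

end RNormOn

theorem euclidean_distance_le_envelope_distance_general
    (r : ℝ) (hr0 : 0 < r) (hr1 : r ≤ 1) :
    ∃ C > (0:ℝ), ∀ (E : Type uE) (_ : AddCommGroup E) (_ : Module ℝ E)
      (Q : RNormOn E r), Q.envBounds.Nonempty →
      ∀ D : ℝ, Gamma2Le (envNorm Q.q) (envNorm Q.q) LinearMap.id D →
        Gamma2Le Q.q Q.q LinearMap.id (C * D ^ (2/r - 1)) ∧
        ∀ x, Q.q x ≤ (C * D ^ (2/r - 2)) * envNorm Q.q x := by
  refine ⟨2 ^ r⁻¹ * (2 ^ r⁻¹ + 1) ^ (2 / r - 2), by positivity, fun E _ _ Q hQ D hD => ?_⟩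
  obtain ⟨hδ0, hδ⟩ := RNormOn.mem_envBounds_of_gamma2Le hr0 hr1 hQ hD
  have hr : 1 ≤ 1 / r := one_le_one_div hr0 hr1
  have hpow : D ^ (2 / r - 1) = D ^ (2 / r - 2) * D := by
    rw [← Real.rpow_add_one' hD.nonneg (by linarith [div_eq_mul_one_div 2 r])]
    congr 1
    ring
  rw [hpow, ← mul_assoc]
  exact ⟨hD.of_le_of_le_mul Q.envNorm_le hδ0 hδ, hδ⟩

/-- **Lemma 12**. There is `C = C(r)` such that every finite-dimensional `r`-normed space
`E` satisfies `d_E ≤ C d_{Ê}^{2/r-1}` and `δ_E ≤ C d_{Ê}^{2/r-2}`. -/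
theorem euclidean_distance_le_envelope_distance
    (r : ℝ) (hr0 : 0 < r) (hr1 : r ≤ 1) :
    ∃ C > (0:ℝ), ∀ (E : Type uE) (_ : AddCommGroup E) (_ : Module ℝ E)
      (Q : RNormOn E r), FiniteDimensional ℝ E →
      ∀ D : ℝ, Gamma2Le (envNorm Q.q) (envNorm Q.q) LinearMap.id D →
        Gamma2Le Q.q Q.q LinearMap.id (C * D ^ (2/r - 1)) ∧
        ∀ x, Q.q x ≤ (C * D ^ (2/r - 2)) * envNorm Q.q x := by
  obtain ⟨C, hC, h⟩ := euclidean_distance_le_envelope_distance_general r hr0 hr1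
  exact ⟨C, hC, fun E _ _ Q _ => h E _ _ Q (Q.envBounds_nonempty hr0)⟩
end
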